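/- Let Γ ⊂ ℂ be a quasismooth Jordan curve. There exist α = α(Γ) ≥ 1 and c = c(Γ) > 0 such that for all 0 < v < u ≤ 1 and all z ∈ Γ, (1/c)(u/v)^{1/α} ≤ ρ_u(z)/ρ_v(z) ≤ c (u/v)^{α}. -/

import Mathlib

open MeasureTheory Metric Set Filter Bornology Complex
open scoped ENNReal NNReal Topology

noncomputable section

/-- `Γ` is a Jordan curve: the image of an injective continuous map of the unit circle. -/
def IsJordanCurve (Γ : Set ℂ) : Prop :=
  ∃ γ : ℂ → ℂ, ContinuousOn γ (Metric.sphere (0:ℂ) 1) ∧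
    Set.InjOn γ (Metric.sphere (0:ℂ) 1) ∧ Γ = γ '' (Metric.sphere (0:ℂ) 1)

/-- A (closed) subarc of `Γ`: a closed connected subset. -/
def IsSubarc (Γ J : Set ℂ) : Prop :=
  J ⊆ Γ ∧ IsClosed J ∧ IsPreconnected J

/-- `|Γ(z₁,z₂)|`: the length (1-dimensional Hausdorff measure) of the shorter subarc of `Γ`
joining `z₁` and `z₂`, described as the infimum of lengths of closed connected subsets of `Γ`
containing both points. -/
def shorterArcLength (Γ : Set ℂ) (z₁ z₂ : ℂ) : ℝ≥0∞ :=
  ⨅ (J : Set ℂ) (_ : IsSubarc Γ J ∧ z₁ ∈ J ∧ z₂ ∈ J), μH[1] J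

/-- `J` is (a realization of) the shorter arc `Γ(z₁,z₂)` of `Γ` between `z₁` and `z₂`. -/
def IsShorterArc (Γ : Set ℂ) (z₁ z₂ : ℂ) (J : Set ℂ) : Prop :=
  IsSubarc Γ J ∧ z₁ ∈ J ∧ z₂ ∈ J ∧ μH[1] J = shorterArcLength Γ z₁ z₂

/-- `Γ` is quasismooth (in the sense of Lavrentiev) with constant `Λ ≥ 1`:
`|Γ(z₁,z₂)| ≤ Λ |z₁ - z₂|`. -/
def IsQuasismooth (Γ : Set ℂ) (Λ : ℝ) : Prop :=
  1 ≤ Λ ∧ ∀ z₁ ∈ Γ, ∀ z₂ ∈ Γ,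
    shorterArcLength Γ z₁ z₂ ≤ ENNReal.ofReal (Λ * dist z₁ z₂)

/-- The union of the unbounded connected components of `Γᶜ`; for a Jordan curve `Γ` this is
the (unique) unbounded component `Ω` of the complement of `Γ`. -/
def unboundedComponent (Γ : Set ℂ) : Set ℂ :=
  {z | z ∉ Γ ∧ ¬ Bornology.IsBounded (connectedComponentIn Γᶜ z)}

/-- `d(A,B) := inf {|z-ζ| : z ∈ A, ζ ∈ B}`. -/
def setDist (A B : Set ℂ) : ℝ := sInf (Set.image2 dist A B)

/-- The exterior `𝔻*` of the closed unit disk (finite part). -/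
def extDisk : Set ℂ := {w : ℂ | 1 < ‖w‖}

/-- `Φ` is the conformal (holomorphic bijective) map of `Ω` onto `𝔻* = {|w| > 1}` normalized
by `Φ(∞) = ∞` and `Φ'(∞) := lim_{z→∞} Φ(z)/z > 0`. -/
def IsExtConformal (Ω : Set ℂ) (Φ : ℂ → ℂ) : Prop :=
  DifferentiableOn ℂ Φ Ω ∧ Set.BijOn Φ Ω extDisk ∧
    ∃ c : ℝ, 0 < c ∧
      Filter.Tendsto (fun z => Φ z / z) (Bornology.cobounded ℂ) (nhds (c : ℂ))

/-- `Φ` additionally extends to a homeomorphism of `closure Ω` onto `{|w| ≥ 1}`. -/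
def IsExtConformalClosure (Ω : Set ℂ) (Φ : ℂ → ℂ) : Prop :=
  IsExtConformal Ω Φ ∧ ContinuousOn Φ (closure Ω) ∧
    Set.BijOn Φ (closure Ω) {w : ℂ | 1 ≤ ‖w‖}

/-- The level curve `Γ_δ := {ζ ∈ Ω : |Φ(ζ)| = 1 + δ}`. -/
def levelCurve (Ω : Set ℂ) (Φ : ℂ → ℂ) (δ : ℝ) : Set ℂ :=
  {ζ ∈ Ω | ‖Φ ζ‖ = 1 + δ}

/-- `ρ_δ(z) := d({z}, Γ_δ)`. -/
def rho (Ω : Set ℂ) (Φ : ℂ → ℂ) (δ : ℝ) (z : ℂ) : ℝ :=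
  Metric.infDist z (levelCurve Ω Φ δ)

/-- `ν ∈ A∞(Γ)` with constant `lam ≥ 1`: `ν(J) ≤ lam · ν(S)` for every subarc `J ⊂ Γ` and
every Borel set `S ⊂ J` with `|J| ≤ 2|S|`. -/
def IsAInftyMeasure (Γ : Set ℂ) (ν : MeasureTheory.Measure ℂ) (lam : ℝ) : Prop :=
  1 ≤ lam ∧ ∀ J S : Set ℂ, IsSubarc Γ J → S ⊆ J → MeasurableSet S →
    μH[1] J ≤ 2 * μH[1] S → ν J ≤ ENNReal.ofReal lam * ν S

/-- `f` has a continuous logarithm on `X`. -/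
def HasLogOn (f : ℂ → ℂ) (X : Set ℂ) : Prop :=
  ∃ L : ℂ → ℂ, ContinuousOn L X ∧ ∀ z ∈ X, exp (L z) = f z

lemma eq_of_exp_eq_of_norm_sub_lt {a b : ℂ} (h : exp a = exp b) (hab : ‖a - b‖ < 2 * Real.pi) :
    a = b := by
  obtain ⟨n, hn⟩ := exp_eq_exp_iff_exists_int.1 h
  have h1 : a - b = n * (2 * Real.pi * I) := by rw [hn]; ring
  rw [h1] at hab
  have h2 : ‖(n : ℂ) * (2 * Real.pi * I)‖ = |(n : ℝ)| * (2 * Real.pi) := by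
    simp [abs_of_pos Real.pi_pos]
  rw [h2] at hab
  have h3 : |(n : ℝ)| < 1 := by
    by_contra! h
    nlinarith [Real.pi_pos]
  have h4 : n = 0 := by
    rw [← Int.cast_abs] at h3
    exact Int.abs_lt_one_iff.1 (by exact_mod_cast h3)
  simpa [h4] using hn

lemma eq_of_exp_eq_on_preconnected {α : Type*} [TopologicalSpace α] {S : Set α} {g : α → ℂ}
    (hS : IsPreconnected S) (hg : ContinuousOn g S)
    (hexp : ∀ x ∈ S, ∀ y ∈ S, exp (g x) = exp (g y))
    {x y : α} (hx : x ∈ S) (hy : y ∈ S) : g x = g y := by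
  refine hS.induction₂ (fun x y => g x = g y) (fun x hx => ?_)
    (fun x y z _ _ _ h1 h2 => h1.trans h2) (fun x y _ _ h => h.symm) hx hy
  have h1 := hg x hx
  have h2 : ∀ᶠ y in 𝓝[S] x, dist (g y) (g x) < 2 * Real.pi :=
    h1.eventually (Metric.ball_mem_nhds _ (by positivity))
  filter_upwards [h2, self_mem_nhdsWithin] with y hy hyS
  exact (eq_of_exp_eq_of_norm_sub_lt (hexp y hyS x hx) (by rwa [← dist_eq_norm])).symm

lemma not_exists_nonvanishing_extension {F : ℂ → ℂ} (hF : Continuous F) (h0 : ∀ z, F z ≠ 0)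
    {a : ℂ} {R : ℝ} (hR : 0 < R) (h : ∀ z, ‖z - a‖ = R → F z = z - a) : False := by
  obtain ⟨G, hG, hGF⟩ : ∃ G : ℂ → ℂ, Continuous G ∧ ∀ z, exp (G z) = F z := by
    have := (isCoveringMapOn_exp.existsUnique_continuousMap_lifts (A := ℂ) ⟨F, hF⟩ (a₀ := 0)
      (e₀ := log (F 0)) (by simpa using exp_log (h0 0)) (by simpa using h0)).exists
    obtain ⟨G, -, hG⟩ := this
    exact ⟨G, G.continuous, fun z => congrFun hG z⟩
  let k : ℝ → ℂ := fun θ => G (a + R * exp (θ * I)) - θ * I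
  have hk : Continuous k := by fun_prop
  have hexp : ∀ θ, exp (k θ) = R := fun θ => by
    have h1 : exp (G (a + R * exp (θ * I))) = R * exp (θ * I) := by
      rw [hGF, h] <;> simp [norm_exp_ofReal_mul_I, abs_of_pos hR]
    rw [exp_sub, h1, mul_div_cancel_right₀ _ (exp_ne_zero _)]
  have := eq_of_exp_eq_on_preconnected isPreconnected_univ hk.continuousOn
    (fun x _ y _ => (hexp x).trans (hexp y).symm) (mem_univ (2 * Real.pi)) (mem_univ 0)
  have h2 : exp (((2 * Real.pi : ℝ) : ℂ) * I) = exp (((0 : ℝ) : ℂ) * I) := by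
    push_cast; rw [exp_two_pi_mul_I]; simp
  simp only [k, h2] at this
  have h3 : ((2 * Real.pi : ℝ) : ℂ) * I = ((0 : ℝ) : ℂ) * I := sub_right_injective this
  simp [Real.pi_ne_zero] at h3

lemma not_hasLogOn_of_isBounded {X U : Set ℂ} (hX : IsClosed X)
    (hUb : IsBounded U) (hfr : frontier U ⊆ X) {a b : ℂ} (ha : a ∈ U) (hb : b ∉ U)
    (h : HasLogOn (fun z => (z - a) / (z - b)) X) (hbX : b ∉ X) : False := by
  classical
  obtain ⟨L, hL, hLe⟩ := h
  obtain ⟨g, hg⟩ := ContinuousMap.exists_restrict_eq hX ⟨X.domRestrict L, hL.domRestrict⟩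
  have hgL : ∀ z ∈ X, g z = L z := fun z hz => by
    have := congrArg (fun f : C(X, ℂ) => f ⟨z, hz⟩) hg
    exact this
  let F : ℂ → ℂ := fun z => if z ∈ U then exp (g z) * (z - b) else z - a
  have hFc : Continuous F := by
    refine continuous_if (fun z hz => ?_) (by fun_prop) (by fun_prop)
    have hzX : z ∈ X := hfr hz
    have hzb : z - b ≠ 0 := sub_ne_zero.2 (fun h => hbX (h ▸ hzX))
    rw [hgL z hzX, hLe z hzX, div_mul_cancel₀ _ hzb]
  have hF0 : ∀ z, F z ≠ 0 := fun z => by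
    by_cases hz : z ∈ U
    · simp only [F, hz, if_true]
      exact mul_ne_zero (exp_ne_zero _) (sub_ne_zero.2 fun h => hb (h ▸ hz))
    · simp only [F, hz, if_false]
      exact sub_ne_zero.2 fun h => hz (h ▸ ha)
  obtain ⟨R, hR⟩ := hUb.subset_ball a
  have hR0 : 0 < R := by simpa using (hR ha)
  refine not_exists_nonvanishing_extension (a := a) hFc hF0 hR0 (fun z hz => ?_)
  have : z ∉ U := fun hzU => by
    have := hR hzU
    rw [mem_ball, dist_eq_norm, hz] at this
    exact lt_irrefl _ this
  simp [F, this]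

lemma frontier_connectedComponentIn_subset {X : Set ℂ} (hX : IsClosed X) (a : ℂ) :
    frontier (connectedComponentIn Xᶜ a) ⊆ X := by
  intro z hz
  by_contra hzX
  have ho := hX.isOpen_compl.connectedComponentIn (x := a)
  have ho' := hX.isOpen_compl.connectedComponentIn (x := z)
  rw [ho.frontier_eq] at hz
  obtain ⟨w, hw1, hw2⟩ := mem_closure_iff.1 hz.1 _ ho' (mem_connectedComponentIn hzX)
  have := connectedComponentIn_eq hw1
  have h2 := connectedComponentIn_eq hw2
  exact hz.2 (by rw [h2, ← this]; exact mem_connectedComponentIn hzX)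

lemma isPreconnected_norm_gt (R : ℝ) (hR : 0 ≤ R) : IsPreconnected {w : ℂ | R < ‖w‖} := by
  have h : {w : ℂ | R < ‖w‖} = (fun p : ℝ × ℝ => (p.1 : ℂ) * exp (p.2 * I)) '' (Ioi R ×ˢ univ) := by
    ext w
    constructor
    · intro hw
      exact ⟨(‖w‖, arg w), ⟨hw, mem_univ _⟩, norm_mul_exp_arg_mul_I w⟩
    · rintro ⟨⟨r, t⟩, ⟨hr, -⟩, rfl⟩
      have hr : R < r := hr
      simpa [norm_exp_ofReal_mul_I, abs_of_pos (hR.trans_lt hr)] using hr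
  rw [h]
  exact (isPreconnected_Ioi.prod isPreconnected_univ).image _ (by fun_prop)

/-- Eilenberg's criterion, easy consequence: if `(z - a) / (z - b)` has a continuous logarithm
on the compact set `X`, then `X` does not separate `a` and `b`. -/
lemma mem_connectedComponentIn_of_hasLogOn {X : Set ℂ} (hX : IsCompact X) {a b : ℂ}
    (ha : a ∉ X) (hb : b ∉ X) (h : HasLogOn (fun z => (z - a) / (z - b)) X) :
    b ∈ connectedComponentIn Xᶜ a := by
  by_contra hab
  have hab' : a ∉ connectedComponentIn Xᶜ b := fun h' => hab (by
    rw [← connectedComponentIn_eq h']; exact mem_connectedComponentIn hb)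
  have hua : ¬ IsBounded (connectedComponentIn Xᶜ a) := fun hbd =>
    not_hasLogOn_of_isBounded hX.isClosed hbd (frontier_connectedComponentIn_subset hX.isClosed a) (mem_connectedComponentIn ha) hab h hb
  have h' : HasLogOn (fun z => (z - b) / (z - a)) X := by
    obtain ⟨L, hL, hLe⟩ := h
    exact ⟨-L, hL.neg, fun z hz => by simp [exp_neg, hLe z hz]⟩
  have hub : ¬ IsBounded (connectedComponentIn Xᶜ b) := fun hbd =>
    not_hasLogOn_of_isBounded hX.isClosed hbd (frontier_connectedComponentIn_subset hX.isClosed b) (mem_connectedComponentIn hb) hab' h' ha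
  obtain ⟨R, hR0, hR⟩ := hX.isBounded.exists_pos_norm_le
  have hV : {w : ℂ | R < ‖w‖} ⊆ Xᶜ := fun w hw hwX => not_lt.2 (hR w hwX) hw
  have key : ∀ p, ¬ IsBounded (connectedComponentIn Xᶜ p) →
      ∃ w ∈ connectedComponentIn Xᶜ p, R < ‖w‖ := fun p hp => by
    by_contra! hcon
    exact hp (isBounded_iff_forall_norm_le.2 ⟨R, hcon⟩)
  obtain ⟨w1, hw1, hw1R⟩ := key a hua
  obtain ⟨w2, hw2, hw2R⟩ := key b hub
  have hsub := (isPreconnected_norm_gt R hR0.le).subset_connectedComponentIn hw1R hV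
  have e1 := connectedComponentIn_eq hw1
  have e2 := connectedComponentIn_eq hw2
  have e3 := connectedComponentIn_eq (hsub hw2R)
  exact hab (by rw [e1, e3, ← e2]; exact mem_connectedComponentIn hb)

lemma HasLogOn.mul {f g : ℂ → ℂ} {X : Set ℂ} (hf : HasLogOn f X) (hg : HasLogOn g X) :
    HasLogOn (fun z => f z * g z) X := by
  obtain ⟨L, hL, hLe⟩ := hf
  obtain ⟨M, hM, hMe⟩ := hg
  exact ⟨L + M, hL.add hM, fun z hz => by simp [exp_add, hLe z hz, hMe z hz]⟩

lemma HasLogOn.congr {f g : ℂ → ℂ} {X : Set ℂ} (hf : HasLogOn f X) (h : ∀ z ∈ X, f z = g z) :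
    HasLogOn g X := by
  obtain ⟨L, hL, hLe⟩ := hf
  exact ⟨L, hL, fun z hz => (hLe z hz).trans (h z hz)⟩

lemma HasLogOn.of_slitPlane {f : ℂ → ℂ} {X : Set ℂ} (hf : ContinuousOn f X)
    (h : ∀ z ∈ X, f z ∈ slitPlane) : HasLogOn f X :=
  ⟨fun z => log (f z), hf.clog h, fun z hz => exp_log (slitPlane_ne_zero (h z hz))⟩

lemma hasLogOn_const {c : ℂ} (hc : c ≠ 0) (X : Set ℂ) : HasLogOn (fun _ => c) X :=
  ⟨fun _ => log c, continuousOn_const, fun _ _ => exp_log hc⟩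

/-- Points of the same connected component of the complement are not separated. -/
lemma hasLogOn_of_isPreconnected {X S : Set ℂ} (hX : IsCompact X) (hS : IsPreconnected S)
    (hSX : S ⊆ Xᶜ) {a b : ℂ} (ha : a ∈ S) (hb : b ∈ S) :
    HasLogOn (fun z => (z - a) / (z - b)) X := by
  have hne : ∀ p ∈ S, ∀ z ∈ X, z - p ≠ 0 := fun p hp z hz h0 =>
    hSX hp (sub_eq_zero.1 h0 ▸ hz)
  refine hS.induction₂ (fun a b => HasLogOn (fun z => (z - a) / (z - b)) X) ?_ ?_ ?_ ha hb
  · intro p hp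
    obtain ⟨ε, hε, hball⟩ := Metric.isOpen_iff.1 hX.isClosed.isOpen_compl p (hSX hp)
    filter_upwards [mem_nhdsWithin_of_mem_nhds (Metric.ball_mem_nhds p (half_pos hε)),
      self_mem_nhdsWithin] with q hq hqS
    refine HasLogOn.of_slitPlane ?_ (fun z hz => ?_)
    · exact ContinuousOn.div (by fun_prop) (by fun_prop) (hne q hqS)
    · have h1 : ε ≤ ‖z - p‖ := by
        by_contra! h
        exact hball (by rwa [mem_ball, dist_eq_norm]) hz
      have hq' : ‖q - p‖ < ε / 2 := by simpa [dist_eq_norm] using hq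
      have h2 : ε / 2 < ‖z - q‖ := by
        have : ‖z - p‖ ≤ ‖z - q‖ + ‖q - p‖ := by
          simpa using norm_add_le (z - q) (q - p)
        linarith
      have h3 : (z - p) / (z - q) = 1 + (q - p) / (z - q) := by
        field_simp [hne q hqS z hz]; ring
      rw [h3]
      refine mem_slitPlane_of_norm_lt_one ?_
      rw [norm_div, div_lt_one (by linarith)]
      linarith
  · intro p q r _ hq _ h1 h2
    refine (h1.mul h2).congr fun z hz => ?_
    have := hne q hq z hz
    field_simp
  · rintro p q _ _ ⟨L, hL, hLe⟩
    exact ⟨-L, hL.neg, fun z hz => by simp [exp_neg, hLe z hz]⟩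

/-- Gluing logarithms on two closed sets along connected pieces. -/
lemma HasLogOn.union {f : ℂ → ℂ} {X Y Y' : Set ℂ} (hX : IsClosed X) (hY : IsClosed Y)
    (hYY' : Y ⊆ Y') (hfX : HasLogOn f X) (hfY : HasLogOn f Y')
    (h : ∀ p ∈ X ∩ Y, ∀ q ∈ X ∩ Y, ∃ S, IsPreconnected S ∧ S ⊆ X ∩ Y' ∧ p ∈ S ∧ q ∈ S) :
    HasLogOn f (X ∪ Y) := by
  classical
  obtain ⟨L, hL, hLe⟩ := hfX
  obtain ⟨M, hM, hMe⟩ := hfY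
  obtain ⟨c, hc, hcX⟩ : ∃ c : ℂ, exp c = 1 ∧ ∀ p ∈ X ∩ Y, L p = M p + c := by
    by_cases hne : (X ∩ Y).Nonempty
    · obtain ⟨q, hq⟩ := hne
      refine ⟨L q - M q, ?_, fun p hp => ?_⟩
      · rw [exp_sub, hLe q hq.1, hMe q (hYY' hq.2), div_self]
        rw [← hLe q hq.1]; exact exp_ne_zero _
      · obtain ⟨S, hS, hSs, hpS, hqS⟩ := h p hp q hq
        have hone : ∀ x ∈ S, exp (L x - M x) = 1 := fun x hx => by
          rw [exp_sub, hLe x (hSs hx).1, hMe x (hSs hx).2, div_self]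
          rw [← hLe x (hSs hx).1]; exact exp_ne_zero _
        have := eq_of_exp_eq_on_preconnected (g := fun x => L x - M x) hS
          ((hL.mono fun x hx => (hSs hx).1).sub (hM.mono fun x hx => (hSs hx).2))
          (fun x hx y hy => (hone x hx).trans (hone y hy).symm) hpS hqS
        linear_combination this
    · exact ⟨0, exp_zero, fun p hp => (hne ⟨p, hp⟩).elim⟩
  refine ⟨fun z => if z ∈ X then L z else M z + c, ?_, ?_⟩
  · refine ContinuousOn.union_of_isClosed (hL.congr fun z hz => by simp [hz])
      (((hM.mono hYY').add (continuousOn_const (c := c))).congr fun z hz => ?_) hX hY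
    by_cases hzX : z ∈ X
    · simp [hzX, hcX z ⟨hzX, hz⟩]
    · simp [hzX]
  · intro z hz
    by_cases hzX : z ∈ X
    · simp [hzX, hLe z hzX]
    · simp [hzX, exp_add, hc, hMe z (hYY' (hz.resolve_left hzX))]

lemma HasLogOn.inv {f : ℂ → ℂ} {X : Set ℂ} (hf : HasLogOn f X) :
    HasLogOn (fun z => (f z)⁻¹) X := by
  obtain ⟨L, hL, hLe⟩ := hf
  exact ⟨-L, hL.neg, fun z hz => by simp [exp_neg, hLe z hz]⟩

lemma HasLogOn.div {f g : ℂ → ℂ} {X : Set ℂ} (hf : HasLogOn f X) (hg : HasLogOn g X) :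
    HasLogOn (fun z => f z / g z) X :=
  (hf.mul hg.inv).congr fun _ _ => (div_eq_mul_inv _ _).symm

lemma hasLogOn_one_sub {u : ℂ → ℂ} {X : Set ℂ} (hu : ContinuousOn u X)
    (h : ∀ z ∈ X, ‖u z‖ < 1) : HasLogOn (fun z => 1 - u z) X := by
  refine HasLogOn.of_slitPlane (continuousOn_const.sub hu) fun z hz => ?_
  rw [sub_eq_add_neg]
  exact mem_slitPlane_of_norm_lt_one (by simpa using h z hz)

lemma hasLogOn_div_outside_ball {x a b : ℂ} {R : ℝ} (ha : dist a x ≤ R) (hb : dist b x ≤ R) :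
    HasLogOn (fun z => (z - a) / (z - b)) {z | R < dist z x} := by
  have hR : 0 ≤ R := dist_nonneg.trans ha
  have hne : ∀ z ∈ {z : ℂ | R < dist z x}, z - x ≠ 0 := fun z hz => by
    have hz : R < dist z x := hz
    rw [← norm_pos_iff, ← dist_eq_norm]; linarith
  have key : ∀ p, dist p x ≤ R → HasLogOn (fun z => 1 - (p - x) / (z - x)) {z | R < dist z x} :=
    fun p hp => hasLogOn_one_sub (ContinuousOn.div (by fun_prop) (by fun_prop) hne) fun z hz => by
      have hz' : R < dist z x := hz
      rw [norm_div, ← dist_eq_norm, ← dist_eq_norm, div_lt_one (hR.trans_lt hz')]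
      linarith
  refine ((key a ha).div (key b hb)).congr fun z hz => ?_
  have h1 := hne z hz
  rw [one_sub_div h1, one_sub_div h1, div_div_div_cancel_right₀ h1]
  congr 1 <;> ring

lemma hasLogOn_div_inside_ball {x a b : ℂ} {R : ℝ} (hR : 0 ≤ R)
    (ha : R < dist a x) (hb : R < dist b x) :
    HasLogOn (fun z => (z - a) / (z - b)) (closedBall x R) := by
  have hne : ∀ p, R < dist p x → p - x ≠ 0 := fun p hp => by
    rw [← norm_pos_iff, ← dist_eq_norm]; linarith
  have key : ∀ p, R < dist p x →
      HasLogOn (fun z => -(p - x) * (1 - (z - x) / (p - x))) (closedBall x R) :=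
    fun p hp => (hasLogOn_const (neg_ne_zero.2 (hne p hp)) _).mul
      (hasLogOn_one_sub (by fun_prop) fun z hz => by
        rw [norm_div, ← dist_eq_norm, ← dist_eq_norm, div_lt_one (hR.trans_lt hp)]
        exact (mem_closedBall.1 hz).trans_lt hp)
  refine ((key a ha).div (key b hb)).congr fun z hz => ?_
  have h1 := hne a ha
  have h2 := hne b hb
  congr 1 <;> field_simp <;> ring

/-- Bounded turning with constant `K`. -/
def IsBoundedTurning (Γ : Set ℂ) (K : ℝ) : Prop :=
  ∀ z₁ ∈ Γ, ∀ z₂ ∈ Γ, ∃ J ⊆ Γ, IsPreconnected J ∧ z₁ ∈ J ∧ z₂ ∈ J ∧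
    J ⊆ closedBall z₁ (K * dist z₁ z₂)

lemma ofReal_dist_le_hausdorffMeasure {J : Set ℂ} (hJ : IsPreconnected J) {z w : ℂ}
    (hz : z ∈ J) (hw : w ∈ J) : ENNReal.ofReal (dist z w) ≤ μH[1] J := by
  have hlip : LipschitzWith 1 (fun y : ℂ => dist z y) := LipschitzWith.dist_right z
  have h1 := hlip.hausdorffMeasure_image_le (d := 1) zero_le_one J
  have h2 : Icc 0 (dist z w) ⊆ (fun y : ℂ => dist z y) '' J :=
    (hJ.image _ hlip.continuous.continuousOn).Icc_subset ⟨z, hz, dist_self z⟩ ⟨w, hw, rfl⟩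
  calc ENNReal.ofReal (dist z w) = μH[1] (Icc 0 (dist z w)) := by
        rw [hausdorffMeasure_real]; simp
    _ ≤ _ := measure_mono h2
    _ ≤ _ := h1
    _ = μH[1] J := by simp

lemma IsQuasismooth.isBoundedTurning {Γ : Set ℂ} {Λ : ℝ} (h : IsQuasismooth Γ Λ) :
    IsBoundedTurning Γ (2 * Λ) := by
  intro z₁ h₁ z₂ h₂
  obtain ⟨hΛ, h⟩ := h
  rcases eq_or_ne z₁ z₂ with rfl | hne
  · exact ⟨{z₁}, by simpa using h₁, isPreconnected_singleton, rfl, rfl, by simp⟩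
  have hd : 0 < dist z₁ z₂ := dist_pos.2 hne
  have hlt : shorterArcLength Γ z₁ z₂ < ENNReal.ofReal (2 * Λ * dist z₁ z₂) :=
    (h z₁ h₁ z₂ h₂).trans_lt ((ENNReal.ofReal_lt_ofReal_iff (by positivity)).2 (by nlinarith))
  simp only [shorterArcLength, iInf_lt_iff] at hlt
  obtain ⟨J, ⟨hJ, hz1, hz2⟩, hlt⟩ := hlt
  refine ⟨J, hJ.1, hJ.2.2, hz1, hz2, fun w hw => ?_⟩
  have := (ofReal_dist_le_hausdorffMeasure hJ.2.2 hz1 hw).trans hlt.le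
  rw [mem_closedBall, dist_comm]
  exact (ENNReal.ofReal_le_ofReal_iff (by positivity)).1 this

lemma IsJordanCurve.isCompact {Γ : Set ℂ} (h : IsJordanCurve Γ) : IsCompact Γ := by
  obtain ⟨γ, hγ, -, rfl⟩ := h
  exact (isCompact_sphere 0 1).image_of_continuousOn hγ

lemma exists_eq_add_of_exp_mul_I_eq {s t : ℝ} (h : exp (s * I) = exp (t * I)) :
    ∃ n : ℤ, s = t + n * (2 * Real.pi) := by
  obtain ⟨n, hn⟩ := exp_eq_exp_iff_exists_int.1 h
  refine ⟨n, ?_⟩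
  have : (s : ℂ) = t + n * (2 * Real.pi) := mul_right_cancel₀ I_ne_zero (by rw [hn]; ring)
  exact_mod_cast this

/-- A Jordan curve parametrized by a periodic function on the line. -/
lemma IsJordanCurve.exists_param {Γ : Set ℂ} (h : IsJordanCurve Γ) :
    ∃ g : ℝ → ℂ, Continuous g ∧ (∀ s, ∀ z ∈ Γ, ∃ t ∈ Ico s (s + 2 * Real.pi), g t = z) ∧
      (∀ t, g t ∈ Γ) ∧ ∀ s t, g s = g t → ∃ n : ℤ, s = t + n * (2 * Real.pi) := by
  obtain ⟨γ, hγ, hinj, rfl⟩ := h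
  have hmem : ∀ t : ℝ, exp (t * I) ∈ sphere (0 : ℂ) 1 := fun t => by
    simp [norm_exp_ofReal_mul_I]
  refine ⟨fun t => γ (exp (t * I)), hγ.comp_continuous (by fun_prop) hmem, ?_,
    fun t => mem_image_of_mem _ (hmem t),
    fun s t hst => exists_eq_add_of_exp_mul_I_eq (hinj (hmem s) (hmem t) hst)⟩
  rintro s _ ⟨w, hw, rfl⟩
  refine ⟨toIcoMod Real.two_pi_pos s (arg w), toIcoMod_mem_Ico _ _ _, ?_⟩
  have hw' : ‖w‖ = 1 := by simpa using hw
  have h1 : exp (arg w * I) = w := by simpa [hw'] using norm_mul_exp_arg_mul_I w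
  rw [toIcoMod]
  push_cast
  rw [sub_mul, exp_sub, h1, zsmul_eq_mul]
  have := exp_int_mul_two_pi_mul_I (toIcoDiv Real.two_pi_pos s (arg w))
  rw [mul_assoc, this, div_one]

lemma IsJordanCurve.exists_two_arcs {Γ : Set ℂ} (h : IsJordanCurve Γ) {p q : ℂ}
    (hp : p ∈ Γ) (hq : q ∈ Γ) :
    ∃ A B : Set ℂ, IsClosed A ∧ IsClosed B ∧ IsPreconnected A ∧ IsPreconnected B ∧
      A ∪ B = Γ ∧ p ∈ A ∧ q ∈ A ∧ p ∈ B ∧ q ∈ B ∧ A ∩ B ⊆ {p, q} := by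
  obtain ⟨g, hg, hsurj, hmem, hinj⟩ := h.exists_param
  obtain ⟨s, -, rfl⟩ := hsurj 0 p hp
  obtain ⟨t, ⟨hst, hts⟩, rfl⟩ := hsurj s q hq
  have hper : g (s + 2 * Real.pi) = g s := by
    obtain ⟨t', ⟨h1, h2⟩, h3⟩ := hsurj s _ (hmem (s + 2 * Real.pi))
    obtain ⟨n, hn⟩ := hinj _ _ h3
    have hn1 : (n : ℝ) = -1 := by
      have h4 : (n : ℝ) < 0 := by nlinarith [Real.pi_pos]
      have h5 : (-2 : ℝ) < n := by nlinarith [Real.pi_pos]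
      have h4' : n < 0 := by exact_mod_cast h4
      have h5' : -2 < n := by exact_mod_cast h5
      have : n = -1 := by omega
      simp [this]
    rw [← h3, hn, hn1]; congr 1; ring
  have hmemA : s ∈ Icc s t := ⟨le_rfl, hst⟩
  refine ⟨g '' Icc s t, g '' Icc t (s + 2 * Real.pi), (isCompact_Icc.image hg).isClosed,
    (isCompact_Icc.image hg).isClosed, isPreconnected_Icc.image _ hg.continuousOn,
    isPreconnected_Icc.image _ hg.continuousOn, ?_, ⟨s, ⟨le_rfl, hst⟩, rfl⟩,
    ⟨t, ⟨hst, le_rfl⟩, rfl⟩, ⟨_, ⟨hts.le, le_rfl⟩, hper⟩, ⟨t, ⟨le_rfl, hts.le⟩, rfl⟩, ?_⟩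
  · rw [← image_union, Icc_union_Icc_eq_Icc hst hts.le]
    refine Subset.antisymm (by rintro _ ⟨t, -, rfl⟩; exact hmem t) fun z hz => ?_
    obtain ⟨t', ht', rfl⟩ := hsurj s z hz
    exact mem_image_of_mem _ ⟨ht'.1, ht'.2.le⟩
  · rintro _ ⟨⟨a, ⟨ha1, ha2⟩, rfl⟩, ⟨b, ⟨hb1, hb2⟩, hab⟩⟩
    obtain ⟨n, hn⟩ := hinj _ _ hab
    have h4 : (-1 : ℝ) < n := by
      by_contra! h
      nlinarith [Real.pi_pos]
    have h5 : (n : ℝ) < 2 := by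
      by_contra! h
      nlinarith [Real.pi_pos]
    have h4' : -1 < n := by exact_mod_cast h4
    have h5' : n < 2 := by exact_mod_cast h5
    obtain rfl | rfl : n = 0 ∨ n = 1 := by omega
    · right
      have : a = t := by simp at hn; linarith
      simp [this]
    · left
      have : a = s := by simp at hn; linarith
      simp [this]

/-- Two points of `Ω` in a disk can be joined inside a larger concentric disk. -/
lemma exists_joining_inside {Γ : Set ℂ} {K : ℝ} (hΓ : IsJordanCurve Γ)
    (hK : IsBoundedTurning Γ K) (hK0 : 0 ≤ K) {S₀ : Set ℂ} (hS₀ : IsPreconnected S₀)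
    (hS₀Γ : S₀ ⊆ Γᶜ) {x a b : ℂ} {R : ℝ} (hR : 0 < R) (ha : a ∈ S₀) (hb : b ∈ S₀)
    (hax : dist a x ≤ R) (hbx : dist b x ≤ R) :
    ∃ P, IsPreconnected P ∧ P ⊆ Γᶜ ∧ a ∈ P ∧ b ∈ P ∧ P ⊆ ball x ((2 * K + 2) * R) := by
  set C := (2 * K + 2) * R with hC
  have hCR : (2 * K + 1) * R < C := by nlinarith
  have hRC : R < C := by nlinarith [mul_nonneg hK0 hR.le]
  have hΓc := hΓ.isCompact
  have hlog : HasLogOn (fun z => (z - a) / (z - b)) (Γ ∪ sphere x C) := by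
    refine HasLogOn.union hΓc.isClosed isClosed_sphere (Y' := {z | R < dist z x})
      (fun z hz => by rw [mem_sphere] at hz; simpa [hz] using hRC)
      (hasLogOn_of_isPreconnected hΓc hS₀ hS₀Γ ha hb) (hasLogOn_div_outside_ball hax hbx) ?_
    rintro p ⟨hp, hpC⟩ q ⟨hq, hqC⟩
    obtain ⟨A, B, hA, hB, hAc, hBc, hAB, hpA, hqA, hpB, hqB, hABi⟩ := hΓ.exists_two_arcs hp hq
    have hAΓ : A ⊆ Γ := hAB ▸ subset_union_left
    have hBΓ : B ⊆ Γ := hAB ▸ subset_union_right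
    by_cases hAR : ∀ e ∈ A, R < dist e x
    · exact ⟨A, hAc, fun e he => ⟨hAΓ he, hAR e he⟩, hpA, hqA⟩
    by_cases hBR : ∀ e ∈ B, R < dist e x
    · exact ⟨B, hBc, fun e he => ⟨hBΓ he, hBR e he⟩, hpB, hqB⟩
    push Not at hAR hBR
    obtain ⟨e₁, he₁, hd₁⟩ := hAR
    obtain ⟨e₂, he₂, hd₂⟩ := hBR
    exfalso
    obtain ⟨J, hJΓ, hJ, h1, h2, hJb⟩ := hK e₁ (hAΓ he₁) e₂ (hBΓ he₂)
    have hJd : ∀ w ∈ J, dist w x < C := fun w hw => by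
      have h3 := mem_closedBall.1 (hJb hw)
      have h4 := dist_triangle w e₁ x
      have h5 := dist_triangle_right e₁ e₂ x
      nlinarith
    have hnot : ∀ w ∈ J, w ∉ ({p, q} : Set ℂ) := by
      rintro w hw (rfl | rfl)
      · exact (hJd _ hw).ne hpC
      · exact (hJd _ hw).ne hqC
    rcases isPreconnected_iff_subset_of_disjoint_closed.1 hJ A B hA hB (hAB ▸ hJΓ)
      (eq_empty_of_forall_notMem fun w hw => hnot w hw.1 (hABi hw.2)) with h | h
    · exact hnot _ h2 (hABi ⟨h h2, he₂⟩)
    · exact hnot _ h1 (hABi ⟨he₁, h h1⟩)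
  have hcpt : IsCompact (Γ ∪ sphere x C) := hΓc.union (isCompact_sphere _ _)
  have haX : a ∉ Γ ∪ sphere x C := fun h => h.elim (hS₀Γ ha) fun h => by
    rw [mem_sphere] at h; linarith
  have hbX : b ∉ Γ ∪ sphere x C := fun h => h.elim (hS₀Γ hb) fun h => by
    rw [mem_sphere] at h; linarith
  have hsub := connectedComponentIn_subset (Γ ∪ sphere x C)ᶜ a
  refine ⟨connectedComponentIn (Γ ∪ sphere x C)ᶜ a, isPreconnected_connectedComponentIn,
    fun z hz hzΓ => hsub hz (Or.inl hzΓ), mem_connectedComponentIn haX,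
    mem_connectedComponentIn_of_hasLogOn hcpt haX hbX hlog, ?_⟩
  refine fun z hz => ?_
  rw [mem_ball]
  by_contra! hzC
  have him := (isPreconnected_connectedComponentIn (x := a) (F := (Γ ∪ sphere x C)ᶜ)).image
    (fun z => dist z x) (by fun_prop)
  obtain ⟨w, hw, hwC⟩ := him.Icc_subset ⟨a, mem_connectedComponentIn haX, rfl⟩ ⟨z, hz, rfl⟩
    ⟨(hax.trans hRC.le), hzC⟩
  exact hsub hw (Or.inr hwC)

/-- Two points of `Ω` outside a disk can be joined outside a smaller concentric disk. -/
lemma exists_joining_outside {Γ : Set ℂ} {K : ℝ} (hΓ : IsJordanCurve Γ)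
    (hK : IsBoundedTurning Γ K) (hK0 : 0 ≤ K) {S₀ : Set ℂ} (hS₀ : IsPreconnected S₀)
    (hS₀Γ : S₀ ⊆ Γᶜ) {x a b : ℂ} {R : ℝ} (hR : 0 < R) (ha : a ∈ S₀) (hb : b ∈ S₀)
    (hax : (2 * K + 2) * R < dist a x) (hbx : (2 * K + 2) * R < dist b x) :
    ∃ P, IsPreconnected P ∧ P ⊆ Γᶜ ∧ a ∈ P ∧ b ∈ P ∧ ∀ z ∈ P, R < dist z x := by
  have hRC : R < (2 * K + 2) * R := by nlinarith [mul_nonneg hK0 hR.le]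
  have hΓc := hΓ.isCompact
  have hlog : HasLogOn (fun z => (z - a) / (z - b)) (Γ ∪ closedBall x R) := by
    refine HasLogOn.union hΓc.isClosed isClosed_closedBall
      (Y' := closedBall x ((2 * K + 2) * R)) (closedBall_subset_closedBall hRC.le)
      (hasLogOn_of_isPreconnected hΓc hS₀ hS₀Γ ha hb)
      (hasLogOn_div_inside_ball (by positivity) hax hbx) ?_
    rintro p ⟨hp, hpR⟩ q ⟨hq, hqR⟩
    obtain ⟨J, hJΓ, hJ, h1, h2, hJb⟩ := hK p hp q hq
    refine ⟨J, hJ, fun w hw => ⟨hJΓ hw, ?_⟩, h1, h2⟩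
    rw [mem_closedBall] at *
    have h3 := mem_closedBall.1 (hJb hw)
    have h4 := dist_triangle w p x
    have h5 := dist_triangle_right p q x
    nlinarith
  have hcpt : IsCompact (Γ ∪ closedBall x R) := hΓc.union (isCompact_closedBall _ _)
  have haX : a ∉ Γ ∪ closedBall x R := fun h => h.elim (hS₀Γ ha) fun h => by
    rw [mem_closedBall] at h; linarith
  have hbX : b ∉ Γ ∪ closedBall x R := fun h => h.elim (hS₀Γ hb) fun h => by
    rw [mem_closedBall] at h; linarith
  have hsub := connectedComponentIn_subset (Γ ∪ closedBall x R)ᶜ a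
  refine ⟨connectedComponentIn (Γ ∪ closedBall x R)ᶜ a, isPreconnected_connectedComponentIn,
    fun z hz hzΓ => hsub hz (Or.inl hzΓ), mem_connectedComponentIn haX,
    mem_connectedComponentIn_of_hasLogOn hcpt haX hbX hlog, fun z hz => ?_⟩
  by_contra! h
  exact hsub hz (Or.inr h)

lemma isOpen_unboundedComponent {Γ : Set ℂ} (hΓ : IsClosed Γ) : IsOpen (unboundedComponent Γ) := by
  rw [isOpen_iff_mem_nhds]
  rintro z ⟨hz, hzb⟩
  refine mem_of_superset (hΓ.isOpen_compl.connectedComponentIn.mem_nhds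
    (mem_connectedComponentIn (F := Γᶜ) hz)) fun w hw => ⟨connectedComponentIn_subset _ _ hw, ?_⟩
  rwa [← connectedComponentIn_eq hw]

lemma subset_unboundedComponent {Γ P : Set ℂ} (hP : IsPreconnected P) (hPΓ : P ⊆ Γᶜ) {a : ℂ}
    (haP : a ∈ P) (ha : a ∈ unboundedComponent Γ) : P ⊆ unboundedComponent Γ := fun w hw =>
  ⟨hPΓ hw, by
    rw [← connectedComponentIn_eq (hP.subset_connectedComponentIn haP hPΓ hw)]; exact ha.2⟩

lemma exists_log_of_continuous {f : ℝ → ℂ} (hf : Continuous f) (h0 : ∀ t, f t ≠ 0) :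
    ∃ G : ℝ → ℂ, Continuous G ∧ ∀ t, exp (G t) = f t := by
  obtain ⟨G, -, hG⟩ := (isCoveringMapOn_exp.existsUnique_continuousMap_lifts ⟨f, hf⟩ (a₀ := 0)
    (e₀ := log (f 0)) (by simpa using exp_log (h0 0)) (by simpa using h0)).exists
  exact ⟨G, G.continuous, fun z => congrFun hG z⟩

/-- A Jordan arc does not separate the plane. -/
lemma mem_connectedComponentIn_compl_arc {g : ℝ → ℂ} (hg : Continuous g) {s t : ℝ} (hst : s ≤ t)
    (hinj : InjOn g (Icc s t)) {a b : ℂ} (ha : a ∉ g '' Icc s t) (hb : b ∉ g '' Icc s t) :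
    b ∈ connectedComponentIn (g '' Icc s t)ᶜ a := by
  refine mem_connectedComponentIn_of_hasLogOn (isCompact_Icc.image hg) ha hb ?_
  let pr : ℝ → ℝ := fun r => projIcc s t hst r
  have hpr : ∀ r, pr r ∈ Icc s t := fun r => (projIcc s t hst r).2
  have hprc : Continuous pr := continuous_subtype_val.comp continuous_projIcc
  have key : ∀ p, p ∉ g '' Icc s t → HasLogOn (fun z => z - p) (g '' Icc s t) := fun p hp => by
    obtain ⟨G, hG, hGe⟩ := exists_log_of_continuous (f := fun r => g (pr r) - p)
      ((hg.comp hprc).sub continuous_const)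
      (fun r h => hp ⟨pr r, hpr r, sub_eq_zero.1 h⟩)
    let e := Function.invFunOn g (Icc s t)
    have he : ∀ r ∈ Icc s t, e (g r) = r := fun r hr => hinj.leftInvOn_invFunOn hr
    refine ⟨fun z => G (e z), hG.comp_continuousOn ?_, ?_⟩
    · rw [continuousOn_iff_isClosed]
      intro T hT
      refine ⟨g '' (Icc s t ∩ T), ((isCompact_Icc.inter_right hT).image hg).isClosed, ?_⟩
      ext z
      constructor
      · rintro ⟨hzT, r, hr, rfl⟩
        rw [mem_preimage, he r hr] at hzT
        exact ⟨⟨r, ⟨hr, hzT⟩, rfl⟩, r, hr, rfl⟩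
      · rintro ⟨⟨r, ⟨hr, hrT⟩, rfl⟩, hz⟩
        exact ⟨by rwa [mem_preimage, he r hr], hz⟩
    · rintro _ ⟨r, hr, rfl⟩
      change exp (G (e (g r))) = g r - p
      rw [he r hr, hGe]
      simp [pr, projIcc_of_mem hst hr]
  exact (key a ha).div (key b hb)

lemma IsJordanCurve.subset_closure_unboundedComponent {Γ : Set ℂ} (h : IsJordanCurve Γ)
    (hne : (unboundedComponent Γ).Nonempty) : Γ ⊆ closure (unboundedComponent Γ) := by
  intro z₀ hz₀
  obtain ⟨b, hb⟩ := hne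
  rw [Metric.mem_closure_iff]
  by_contra! hc
  obtain ⟨ε, hε, hc⟩ := hc
  obtain ⟨g, hg, hsurj, hmem, hinj⟩ := h.exists_param
  obtain ⟨m, -, rfl⟩ := hsurj 0 z₀ hz₀
  obtain ⟨η', hη', hball⟩ := Metric.continuous_iff.1 hg m ε hε
  obtain ⟨η, hη0, hη1, hηπ⟩ : ∃ η : ℝ, 0 < η ∧ η < η' ∧ η < Real.pi :=
    ⟨min η' Real.pi / 2, by have := lt_min hη' Real.pi_pos; linarith,
      by have := lt_min hη' Real.pi_pos; have := min_le_left η' Real.pi; linarith,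
      by have := lt_min hη' Real.pi_pos; have := min_le_right η' Real.pi; linarith⟩
  have hint : ∀ n : ℤ, -(2 * Real.pi) < n * (2 * Real.pi) → n * (2 * Real.pi) < 2 * Real.pi →
      n = 0 := fun n h1 h2 => by
    have hp := Real.two_pi_pos
    have h3 : (-1 : ℝ) < n := by nlinarith
    have h4 : (n : ℝ) < 1 := by nlinarith
    have h3' : -1 < n := by exact_mod_cast h3
    have h4' : n < 1 := by exact_mod_cast h4
    omega
  have hJinj : InjOn g (Icc (m + η) (m + 2 * Real.pi - η)) := fun r hr r' hr' hrr => by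
    obtain ⟨n, hn⟩ := hinj r r' hrr
    have := hint n (by linarith [hr.1, hr'.2]) (by linarith [hr.2, hr'.1])
    simpa [this] using hn
  have hz₀J : g m ∉ g '' Icc (m + η) (m + 2 * Real.pi - η) := by
    rintro ⟨r, hr, hrm⟩
    obtain ⟨n, hn⟩ := hinj r m hrm
    have := hint n (by linarith [hr.1]) (by linarith [hr.2])
    rw [this] at hn
    have := hr.1
    simp at hn; linarith
  have hJΓ : g '' Icc (m + η) (m + 2 * Real.pi - η) ⊆ Γ := by
    rintro _ ⟨r, -, rfl⟩; exact hmem r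
  have hcover : ∀ z ∈ Γ, z ∉ g '' Icc (m + η) (m + 2 * Real.pi - η) → dist z (g m) < ε :=
    fun z hz hzJ => by
    obtain ⟨t, ht, rfl⟩ := hsurj (m - η) z hz
    apply hball
    rw [Real.dist_eq, abs_lt]
    by_contra hcon
    apply hzJ
    refine ⟨t, ⟨?_, by linarith [ht.2]⟩, rfl⟩
    by_contra! hlt
    exact hcon ⟨by linarith [ht.1], by linarith⟩
  have hbP := mem_connectedComponentIn_compl_arc hg (by linarith) hJinj hz₀J
    (fun hbJ => hb.1 (hJΓ hbJ))
  set J := g '' Icc (m + η) (m + 2 * Real.pi - η)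
  have hΓc := h.isCompact.isClosed
  have hsub : connectedComponentIn Jᶜ (g m) ⊆ unboundedComponent Γ := by
    refine isPreconnected_connectedComponentIn.subset_of_closure_inter_subset
      (isOpen_unboundedComponent hΓc) ⟨b, hbP, hb⟩ ?_
    rintro x ⟨hx, hxP⟩
    have hxΓ : x ∈ Γᶜ := fun hxΓ => by
      have h1 := hcover x hxΓ (connectedComponentIn_subset _ _ hxP)
      obtain ⟨y, hy, hxy⟩ := Metric.mem_closure_iff.1 hx (ε - dist x (g m)) (by linarith)
      have := hc y hy
      have := dist_triangle_left (g m) y x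
      linarith
    obtain ⟨δ, hδ, hδΓ⟩ := Metric.isOpen_iff.1 hΓc.isOpen_compl x hxΓ
    obtain ⟨y, hy, hxy⟩ := Metric.mem_closure_iff.1 hx δ hδ
    exact subset_unboundedComponent (convex_ball x δ).isPreconnected hδΓ
      (by rwa [mem_ball, dist_comm]) hy (mem_ball_self hδ)
  exact (hsub (mem_connectedComponentIn hz₀J)).1 hz₀

section InjectiveHolomorphic

variable {U : Set ℂ} {f : ℂ → ℂ}

lemma nhds_le_map_nhds_of_injOn (hU : IsOpen U) (hf : DifferentiableOn ℂ f U)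
    (hinj : InjOn f U) {x : ℂ} (hx : x ∈ U) : 𝓝 (f x) ≤ map f (𝓝 x) := by
  refine ((hf.analyticAt (hU.mem_nhds hx)).eventually_constant_or_nhds_le_map_nhds).resolve_left
    fun hc => ?_
  have h1 : ∀ᶠ z in 𝓝[≠] x, f z = f x ∧ z ∈ U ∧ z ≠ x :=
    (hc.filter_mono nhdsWithin_le_nhds).and
      (((hU.eventually_mem hx).filter_mono nhdsWithin_le_nhds).and self_mem_nhdsWithin)
  obtain ⟨z, hz, hzU, hzx⟩ := h1.exists
  exact hzx (hinj hzU hx hz)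

lemma isOpen_image_of_injOn (hU : IsOpen U) (hf : DifferentiableOn ℂ f U)
    (hinj : InjOn f U) {V : Set ℂ} (hV : IsOpen V) (hVU : V ⊆ U) : IsOpen (f '' V) := by
  rw [isOpen_iff_mem_nhds]
  rintro _ ⟨x, hx, rfl⟩
  exact nhds_le_map_nhds_of_injOn hU hf hinj (hVU hx) (image_mem_map (hV.mem_nhds hx))

lemma continuousAt_invFunOn (hU : IsOpen U) (hf : DifferentiableOn ℂ f U)
    (hinj : InjOn f U) {x : ℂ} (hx : x ∈ U) : ContinuousAt (Function.invFunOn f U) (f x) := by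
  intro V hV
  rw [hinj.leftInvOn_invFunOn hx] at hV
  refine nhds_le_map_nhds_of_injOn hU hf hinj hx (mem_map.2 ?_)
  filter_upwards [hV, hU.mem_nhds hx] with y hy hyU
  rwa [mem_preimage, mem_preimage, hinj.leftInvOn_invFunOn hyU]

lemma differentiableAt_invFunOn (hU : IsOpen U) (hf : DifferentiableOn ℂ f U)
    (hinj : InjOn f U) {x : ℂ} (hx : x ∈ U) :
    DifferentiableAt ℂ (Function.invFunOn f U) (f x) := by
  have hleft := hinj.leftInvOn_invFunOn
  have hopen := isOpen_image_of_injOn hU hf hinj hU Subset.rfl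
  have hreg : ∀ y ∈ U, deriv f y ≠ 0 → DifferentiableAt ℂ (Function.invFunOn f U) (f y) :=
    fun y hy hd => by
    refine (HasDerivAt.of_local_left_inverse (f := f) (f' := deriv f y)
      (continuousAt_invFunOn hU hf hinj hy) ?_ hd ?_).differentiableAt
    · rw [hleft hy]
      exact (hf.differentiableAt (hU.mem_nhds hy)).hasDerivAt
    · filter_upwards [hopen.mem_nhds (mem_image_of_mem f hy)] with w hw
      exact Function.invFunOn_eq hw
  have hne : ∀ᶠ y in 𝓝[≠] x, deriv f y ≠ 0 := by
    refine ((hf.analyticAt (hU.mem_nhds hx)).deriv.eventually_eq_zero_or_eventually_ne_zero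
      ).resolve_left fun h0 => ?_
    obtain ⟨r, hr, hball⟩ := Metric.mem_nhds_iff.1 (h0.and (hU.mem_nhds hx))
    have hcst : ∀ y ∈ ball x r, f y = f x := fun y hy =>
      isOpen_ball.is_const_of_deriv_eq_zero (convex_ball x r).isPreconnected
        (hf.mono fun y hy => (hball hy).2) (fun y hy => (hball hy).1) hy (mem_ball_self hr)
    have hy : x + (r / 2 : ℝ) ∈ ball x r := by
      simp [abs_of_pos hr]; linarith
    have := hinj (hball hy).2 hx (hcst _ hy)
    simp at this
    linarith
  refine (analyticAt_of_differentiable_on_punctured_nhds_of_continuousAt ?_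
    (continuousAt_invFunOn hU hf hinj hx)).differentiableAt
  have hcont := continuousAt_invFunOn hU hf hinj hx
  have h1 : Tendsto (Function.invFunOn f U) (𝓝[≠] (f x)) (𝓝[≠] x) := by
    refine tendsto_nhdsWithin_iff.2 ⟨?_, ?_⟩
    · have := hcont.tendsto
      rw [hleft hx] at this
      exact this.mono_left nhdsWithin_le_nhds
    · filter_upwards [self_mem_nhdsWithin,
        nhdsWithin_le_nhds (hopen.mem_nhds (mem_image_of_mem f hx))] with w hw hwU hwx
      have := Function.invFunOn_eq hwU
      rw [show Function.invFunOn f U w = x from hwx] at this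
      exact hw this.symm
  filter_upwards [h1.eventually hne,
    nhdsWithin_le_nhds (hopen.mem_nhds (mem_image_of_mem f hx))] with w hw hwU
  have := hreg _ (Function.invFunOn_mem hwU) hw
  rwa [Function.invFunOn_eq hwU] at this

end InjectiveHolomorphic

lemma norm_gt_subset_unboundedComponent {Γ : Set ℂ} {R : ℝ} (hR : 0 ≤ R)
    (hΓ : ∀ z ∈ Γ, ‖z‖ ≤ R) : {z : ℂ | R < ‖z‖} ⊆ unboundedComponent Γ := by
  intro z hz
  have hsub : {z : ℂ | R < ‖z‖} ⊆ Γᶜ := fun w hw hwΓ => (hΓ w hwΓ).not_gt hw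
  refine ⟨hsub hz, fun hb => ?_⟩
  have hb' := hb.subset ((isPreconnected_norm_gt R hR).subset_connectedComponentIn hz hsub)
  obtain ⟨C, hC⟩ := isBounded_iff_forall_norm_le.1 hb'
  have h1 : ((max C R + 1 : ℝ) : ℂ) ∈ {z : ℂ | R < ‖z‖} := by
    have := le_max_right C R
    simp only [mem_ofPred_eq, norm_real, Real.norm_eq_abs]
    exact lt_of_lt_of_le (by linarith) (le_abs_self _)
  have h2 := hC _ h1
  rw [norm_real, Real.norm_eq_abs] at h2
  have := le_max_left C R
  have := le_abs_self (max C R + 1)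
  linarith

section ExteriorMap

variable {Ω : Set ℂ} {Φ : ℂ → ℂ}

lemma IsExtConformal.tendsto_norm (h : IsExtConformal Ω Φ) :
    Tendsto (fun z => ‖Φ z‖) (cobounded ℂ) atTop := by
  obtain ⟨-, -, c, hc, hlim⟩ := h
  have h1 : Tendsto (fun z => ‖Φ z / z‖ * ‖z‖) (cobounded ℂ) atTop :=
    hlim.norm.pos_mul_atTop (by simpa using hc.ne') tendsto_norm_cobounded_atTop
  refine h1.congr' ?_
  filter_upwards [eventually_ne_cobounded (0 : ℂ)] with z hz
  rw [← norm_mul, div_mul_cancel₀ _ hz]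

/-- The inverse of the exterior conformal map. -/
def extInv (Ω : Set ℂ) (Φ : ℂ → ℂ) : ℂ → ℂ := Function.invFunOn Φ Ω

lemma IsExtConformal.extInv_mem (h : IsExtConformal Ω Φ) {w : ℂ} (hw : w ∈ extDisk) :
    extInv Ω Φ w ∈ Ω := Function.invFunOn_mem (h.2.1.surjOn hw)

lemma IsExtConformal.apply_extInv (h : IsExtConformal Ω Φ) {w : ℂ} (hw : w ∈ extDisk) :
    Φ (extInv Ω Φ w) = w := Function.invFunOn_eq (h.2.1.surjOn hw)

lemma IsExtConformal.extInv_apply (h : IsExtConformal Ω Φ) {z : ℂ} (hz : z ∈ Ω) :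
    extInv Ω Φ (Φ z) = z := h.2.1.injOn.leftInvOn_invFunOn hz

lemma IsExtConformal.injOn_extInv (h : IsExtConformal Ω Φ) : InjOn (extInv Ω Φ) extDisk :=
  fun a ha b hb hab => by rw [← h.apply_extInv ha, hab, h.apply_extInv hb]

lemma IsExtConformal.differentiableAt_extInv (h : IsExtConformal Ω Φ) (hΩ : IsOpen Ω) {w : ℂ}
    (hw : w ∈ extDisk) : DifferentiableAt ℂ (extInv Ω Φ) w := by
  have := differentiableAt_invFunOn hΩ h.1 h.2.1.injOn (h.extInv_mem hw)
  rwa [h.apply_extInv hw] at this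

lemma IsExtConformal.differentiableOn_extInv (h : IsExtConformal Ω Φ) (hΩ : IsOpen Ω) :
    DifferentiableOn ℂ (extInv Ω Φ) extDisk := fun _ hw =>
  (h.differentiableAt_extInv hΩ hw).differentiableWithinAt

lemma IsExtConformal.image_extInv (h : IsExtConformal Ω Φ) : extInv Ω Φ '' extDisk = Ω := by
  ext z
  exact ⟨by rintro ⟨w, hw, rfl⟩; exact h.extInv_mem hw,
    fun hz => ⟨Φ z, h.2.1.mapsTo hz, h.extInv_apply hz⟩⟩

lemma IsExtConformal.isPreconnected (h : IsExtConformal Ω Φ) (hΩ : IsOpen Ω) :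
    IsPreconnected Ω := by
  rw [← h.image_extInv]
  exact (isPreconnected_norm_gt 1 zero_le_one).image _ (h.differentiableOn_extInv hΩ).continuousOn

/-- Bounded sets have bounded image under the exterior map. -/
lemma IsExtConformal.exists_norm_le (h : IsExtConformal Ω Φ) (hΩ : IsOpen Ω) {R₀ : ℝ}
    (hR₀ : {z : ℂ | R₀ < ‖z‖} ⊆ Ω) (R : ℝ) :
    ∃ R', ∀ ζ ∈ Ω, ‖ζ‖ ≤ R → ‖Φ ζ‖ ≤ R' := by
  obtain ⟨S, hS0, hSR⟩ : ∃ S, R₀ < S ∧ R ≤ S := ⟨max R (R₀ + 1),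
    by have := le_max_right R (R₀ + 1); linarith, le_max_left _ _⟩
  have hSΩ : ∀ z : ℂ, S ≤ ‖z‖ → z ∈ Ω := fun z hz => hR₀ (hS0.trans_le hz)
  have hcont := h.1.continuousOn
  obtain ⟨B, hB⟩ := ((isCompact_sphere (0 : ℂ) S).image_of_continuousOn
    (hcont.mono fun z hz => hSΩ z (by simpa using (mem_sphere_zero_iff_norm.1 hz).ge))
    ).isBounded.exists_norm_le
  set R' := max B 1
  set E := Φ '' {z : ℂ | S < ‖z‖}
  have hE : IsOpen E := isOpen_image_of_injOn hΩ h.1 h.2.1.injOn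
    (isOpen_lt continuous_const continuous_norm) fun z hz => hSΩ z (le_of_lt hz)
  have hAE : {w : ℂ | R' < ‖w‖} ⊆ E := by
    refine (isPreconnected_norm_gt R' (by positivity)).subset_of_closure_inter_subset hE ?_ ?_
    · obtain ⟨z, hz1, hz2⟩ := ((h.tendsto_norm.eventually_gt_atTop R').and
        (tendsto_norm_cobounded_atTop.eventually_gt_atTop S)).exists
      exact ⟨Φ z, hz1, z, hz2, rfl⟩
    · rintro w ⟨hw, hwA⟩
      obtain ⟨T, hT⟩ : ∃ T, ∀ z : ℂ, T ≤ ‖z‖ → ‖w‖ + 1 < ‖Φ z‖ := by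
        have := h.tendsto_norm.eventually_gt_atTop (‖w‖ + 1)
        rw [← comap_norm_atTop, eventually_comap, eventually_atTop] at this
        obtain ⟨T, hT⟩ := this
        exact ⟨T, fun z hz => hT _ hz z rfl⟩
      have hK : IsCompact (closedBall (0 : ℂ) T ∩ {z : ℂ | S ≤ ‖z‖}) :=
        (isCompact_closedBall _ _).inter_right (isClosed_le continuous_const continuous_norm)
      have hΦK := hK.image_of_continuousOn (hcont.mono fun z hz => hSΩ z hz.2)
      have hwK : w ∈ closure (Φ '' (closedBall (0 : ℂ) T ∩ {z : ℂ | S ≤ ‖z‖})) := by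
        rw [Metric.mem_closure_iff] at hw ⊢
        intro ε hε
        obtain ⟨_, ⟨z, hz, rfl⟩, hd⟩ := hw (min ε 1) (by positivity)
        refine ⟨Φ z, ⟨z, ⟨?_, show S ≤ ‖z‖ from le_of_lt hz⟩, rfl⟩, hd.trans_le (min_le_left _ _)⟩
        rw [mem_closedBall_zero_iff]
        by_contra! hlt
        have h1 := hT z hlt.le
        have h2 : dist w (Φ z) < 1 := hd.trans_le (min_le_right _ _)
        rw [dist_comm, dist_eq_norm] at h2
        have := norm_sub_norm_le (Φ z) w
        linarith
      rw [hΦK.isClosed.closure_eq] at hwK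
      obtain ⟨z, ⟨-, hz⟩, rfl⟩ := hwK
      refine ⟨z, show S < ‖z‖ from lt_of_le_of_ne hz fun hSz => ?_, rfl⟩
      have := hB _ ⟨z, by simp [hSz], rfl⟩
      exact (this.trans (le_max_left B 1)).not_gt hwA
  refine ⟨R', fun ζ hζ hζR => ?_⟩
  by_contra! hlt
  obtain ⟨z, hz, hzζ⟩ := hAE hlt
  have := h.2.1.injOn (hSΩ z (le_of_lt hz)) hζ hzζ
  subst this
  exact (hζR.trans hSR).not_gt hz

lemma IsExtConformal.isClosed_superlevel (h : IsExtConformal Ω Φ) (hΩ : IsOpen Ω) {R₀ : ℝ}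
    (hR₀ : {z : ℂ | R₀ < ‖z‖} ⊆ Ω) {v : ℝ} (hv : 0 < v) :
    IsClosed {ζ ∈ Ω | 1 + v ≤ ‖Φ ζ‖} := by
  refine isClosed_of_closure_subset fun x hx => ?_
  obtain ⟨R', hR'⟩ := h.exists_norm_le hΩ hR₀ (‖x‖ + 1)
  have hK : IsCompact (closedBall (0 : ℂ) R' ∩ {w : ℂ | 1 + v ≤ ‖w‖}) :=
    (isCompact_closedBall _ _).inter_right (isClosed_le continuous_const continuous_norm)
  have hKD : closedBall (0 : ℂ) R' ∩ {w : ℂ | 1 + v ≤ ‖w‖} ⊆ extDisk := fun w hw => by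
    have : 1 + v ≤ ‖w‖ := hw.2
    change 1 < ‖w‖
    linarith
  have hΨK := hK.image_of_continuousOn ((h.differentiableOn_extInv hΩ).continuousOn.mono hKD)
  have hxK : x ∈ closure (extInv Ω Φ '' (closedBall (0 : ℂ) R' ∩ {w : ℂ | 1 + v ≤ ‖w‖})) := by
    rw [Metric.mem_closure_iff] at hx ⊢
    intro ε hε
    obtain ⟨ζ, ⟨hζ, hζv⟩, hd⟩ := hx (min ε 1) (by positivity)
    refine ⟨ζ, ⟨Φ ζ, ⟨?_, hζv⟩, h.extInv_apply hζ⟩, hd.trans_le (min_le_left _ _)⟩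
    rw [mem_closedBall_zero_iff]
    refine hR' ζ hζ ?_
    have h2 : dist x ζ < 1 := hd.trans_le (min_le_right _ _)
    rw [dist_comm, dist_eq_norm] at h2
    have := norm_sub_norm_le ζ x
    linarith
  rw [hΨK.isClosed.closure_eq] at hxK
  obtain ⟨w, hw, rfl⟩ := hxK
  exact ⟨h.extInv_mem (hKD hw), by rw [h.apply_extInv (hKD hw)]; exact hw.2⟩

lemma IsExtConformal.levelCurve_eq (h : IsExtConformal Ω Φ) {v : ℝ} (hv : 0 < v) :
    levelCurve Ω Φ v = extInv Ω Φ '' sphere 0 (1 + v) := by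
  ext z
  constructor
  · rintro ⟨hz, hzv⟩
    exact ⟨Φ z, by simpa using hzv, h.extInv_apply hz⟩
  · rintro ⟨w, hw, rfl⟩
    have hw' : ‖w‖ = 1 + v := by simpa using hw
    have hwD : w ∈ extDisk := by change 1 < ‖w‖; linarith
    exact ⟨h.extInv_mem hwD, by rw [h.apply_extInv hwD, hw']⟩

lemma IsExtConformal.exists_rho_eq (h : IsExtConformal Ω Φ) (hΩ : IsOpen Ω) {v : ℝ} (hv : 0 < v)
    (z : ℂ) : ∃ w, ‖w‖ = 1 + v ∧ rho Ω Φ v z = dist z (extInv Ω Φ w) := by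
  have hc : IsCompact (levelCurve Ω Φ v) := by
    rw [h.levelCurve_eq hv]
    refine (isCompact_sphere _ _).image_of_continuousOn
      ((h.differentiableOn_extInv hΩ).continuousOn.mono fun w hw => ?_)
    have hw' : ‖w‖ = 1 + v := by simpa using hw
    change 1 < ‖w‖
    linarith
  have hne : (levelCurve Ω Φ v).Nonempty := by
    rw [h.levelCurve_eq hv]
    exact (NormedSpace.sphere_nonempty.2 (by linarith)).image _
  obtain ⟨y, hy, hyd⟩ := hc.exists_infDist_eq_dist hne z
  rw [h.levelCurve_eq hv] at hy
  obtain ⟨w, hw, rfl⟩ := hy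
  exact ⟨w, by simpa using hw, hyd⟩

lemma IsExtConformal.rho_le_dist (h : IsExtConformal Ω Φ) (hΩ : IsOpen Ω) {R₀ : ℝ}
    (hR₀ : {z : ℂ | R₀ < ‖z‖} ⊆ Ω) {v : ℝ} (hv : 0 < v) {z ζ : ℂ} (hz : z ∉ Ω) (hζ : ζ ∈ Ω)
    (hζv : 1 + v ≤ ‖Φ ζ‖) : rho Ω Φ v z ≤ dist z ζ := by
  have hcl := h.isClosed_superlevel hΩ hR₀ hv
  obtain ⟨p, hps, hp⟩ : ∃ p ∈ segment ℝ z ζ, p ∈ levelCurve Ω Φ v := by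
    by_contra! hno
    have hopen : IsOpen {ζ ∈ Ω | 1 + v < ‖Φ ζ‖} :=
      h.1.continuousOn.norm.isOpen_inter_preimage hΩ isOpen_Ioi
    have hsub := (convex_segment (𝕜 := ℝ) z ζ).isPreconnected.subset_of_closure_inter_subset
      hopen ⟨ζ, right_mem_segment ℝ z ζ, hζ, lt_of_le_of_ne hζv fun he =>
        hno ζ (right_mem_segment ℝ z ζ) ⟨hζ, he.symm⟩⟩ (by
        rintro x ⟨hx, hxs⟩
        have hle : {ζ ∈ Ω | 1 + v < ‖Φ ζ‖} ⊆ {ζ ∈ Ω | 1 + v ≤ ‖Φ ζ‖} :=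
          fun y hy => ⟨hy.1, le_of_lt hy.2⟩
        have hxF := closure_minimal hle hcl hx
        exact ⟨hxF.1, lt_of_le_of_ne hxF.2 fun he => hno x hxs ⟨hxF.1, he.symm⟩⟩)
    exact hz (hsub (left_mem_segment ℝ z ζ)).1
  refine (infDist_le_dist_of_mem hp).trans ?_
  have := dist_add_dist_of_mem_segment hps
  have := dist_nonneg (x := p) (y := ζ)
  linarith

lemma IsExtConformal.rho_pos (h : IsExtConformal Ω Φ) (hΩ : IsOpen Ω) {v : ℝ} (hv : 0 < v)
    {z : ℂ} (hz : z ∉ Ω) : 0 < rho Ω Φ v z := by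
  obtain ⟨w, hw, hd⟩ := h.exists_rho_eq hΩ hv z
  rw [hd, dist_pos]
  rintro rfl
  exact hz (h.extInv_mem (by change 1 < ‖w‖; linarith))

lemma IsExtConformal.rho_mono (h : IsExtConformal Ω Φ) (hΩ : IsOpen Ω) {R₀ : ℝ}
    (hR₀ : {z : ℂ | R₀ < ‖z‖} ⊆ Ω) {u v : ℝ} (hv : 0 < v) (hvu : v ≤ u) {z : ℂ} (hz : z ∉ Ω) :
    rho Ω Φ v z ≤ rho Ω Φ u z := by
  obtain ⟨w, hw, hd⟩ := h.exists_rho_eq hΩ (hv.trans_le hvu) z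
  have hwD : w ∈ extDisk := by change 1 < ‖w‖; linarith
  rw [hd]
  exact h.rho_le_dist hΩ hR₀ hv hz (h.extInv_mem hwD) (by rw [h.apply_extInv hwD]; linarith)

end ExteriorMap

/-- A local form of Bloch's theorem. -/
lemma ball_subset_image_of_norm_deriv_le {L : ℂ → ℂ} {a : ℂ} {s A : ℝ} (hs : 0 < s) (hA : 0 < A)
    (hL : DifferentiableOn ℂ L (ball a s)) (ha : ‖deriv L a‖ = A)
    (hb : ∀ w ∈ ball a s, ‖deriv L w‖ ≤ 2 * A) :
    ball (L a) (A * s / 24) ⊆ L '' ball a s := by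
  have hsub : closedBall a (s / 6) ⊆ ball a s := closedBall_subset_ball (by linarith)
  have hd : DifferentiableOn ℂ (deriv L) (ball a s) := hL.deriv isOpen_ball
  have hmaps : MapsTo (deriv L) (ball a s) (closedBall (deriv L a) (3 * A)) := fun w hw => by
    rw [mem_closedBall, dist_eq_norm]
    have := norm_sub_le (deriv L w) (deriv L a)
    have := hb w hw
    linarith
  have hclose : ∀ w ∈ closedBall a (s / 6), ‖deriv L w - deriv L a‖ ≤ A / 2 := fun w hw => by
    rw [← dist_eq_norm]
    refine (Complex.dist_le_div_mul_dist_of_mapsTo_ball hd hmaps (hsub hw)).trans ?_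
    rw [mem_closedBall] at hw
    calc 3 * A / s * dist w a ≤ 3 * A / s * (s / 6) := by gcongr
      _ = A / 2 := by field_simp; norm_num
  have hlow : ∀ w ∈ sphere a (s / 6), A * s / 12 ≤ ‖L w - L a‖ := fun w hw => by
    have hder : ∀ x ∈ closedBall a (s / 6), HasDerivWithinAt (fun x => L x - deriv L a * x)
        (deriv L x - deriv L a) (closedBall a (s / 6)) x := fun x hx => by
      have h1 := (hL.differentiableAt (isOpen_ball.mem_nhds (hsub hx))).hasDerivAt
      have h2 : HasDerivAt (fun x => deriv L a * x) (deriv L a) x := by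
        simpa using (hasDerivAt_id' x).const_mul (deriv L a)
      exact (h1.sub h2).hasDerivWithinAt
    have h1 := (convex_closedBall a (s / 6)).norm_image_sub_le_of_norm_hasDerivWithin_le hder hclose
      (mem_closedBall_self (by positivity)) (sphere_subset_closedBall hw)
    have hwa : ‖w - a‖ = s / 6 := by simpa [dist_eq_norm] using hw
    rw [hwa] at h1
    have h2 : ‖deriv L a * (w - a)‖ = A * (s / 6) := by rw [norm_mul, ha, hwa]
    have h3 := norm_sub_norm_le (deriv L a * (w - a)) (L w - L a)
    have h4 : ‖deriv L a * (w - a) - (L w - L a)‖ =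
        ‖L w - deriv L a * w - (L a - deriv L a * a)‖ := by
      rw [← norm_neg]; congr 1; ring
    rw [h4, h2] at h3
    linarith
  have hfreq : ∃ᶠ z in 𝓝 a, L z ≠ L a := by
    have hda := (hL.differentiableAt (isOpen_ball.mem_nhds (mem_ball_self hs))).hasDerivAt
    have := hda.eventually_ne (c := L a) (by rw [← norm_pos_iff, ha]; exact hA)
    exact this.frequently.filter_mono nhdsWithin_le_nhds
  have hdc : DiffContOnCl ℂ L (ball a (s / 6)) :=
    hL.diffContOnCl_ball hsub
  have := hdc.ball_subset_image_closedBall (by positivity) hlow hfreq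
  rw [show A * s / 12 / 2 = A * s / 24 by ring] at this
  exact this.trans (image_mono hsub)

/-- A weak Koebe distortion estimate. -/
lemma norm_deriv_mul_le_of_injOn {F : ℂ → ℂ} {w₀ z : ℂ} {R : ℝ} (hR : 0 < R)
    (hF : DifferentiableOn ℂ F (ball w₀ R)) (hinj : InjOn F (ball w₀ R))
    (hz : ∀ w ∈ ball w₀ R, F w ≠ z) :
    ‖deriv F w₀‖ * R ≤ 48 * Real.pi * ‖F w₀ - z‖ := by
  have h0 : ∀ w ∈ ball w₀ R, F w - z ≠ 0 := fun w hw => sub_ne_zero.2 (hz w hw)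
  have hw₀ : w₀ ∈ ball w₀ R := mem_ball_self hR
  have hFd : ∀ w ∈ ball w₀ R, HasDerivAt F (deriv F w) w := fun w hw =>
    (hF.differentiableAt (isOpen_ball.mem_nhds hw)).hasDerivAt
  have hq : DifferentiableOn ℂ (fun w => deriv F w / (F w - z)) (ball w₀ R) :=
    (hF.deriv isOpen_ball).div (hF.sub_const z) h0
  obtain ⟨L₀, hL₀⟩ := hq.isExactOn_ball
  let L : ℂ → ℂ := fun w => L₀ w - L₀ w₀ + log (F w₀ - z)
  have hL : ∀ w ∈ ball w₀ R, HasDerivAt L (deriv F w / (F w - z)) w := fun w hw =>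
    ((hL₀ w hw).sub_const _).add_const _
  have hexp : ∀ w ∈ ball w₀ R, exp (L w) = F w - z := fun w hw => by
    have hder : ∀ x ∈ ball w₀ R, HasDerivAt (fun x => exp (-L x) * (F x - z)) 0 x :=
      fun x hx => by
      have := ((hL x hx).neg.cexp).mul ((hFd x hx).sub_const z)
      convert! this using 1
      field_simp [h0 x hx]
      ring
    have hc : exp (-L w) * (F w - z) = exp (-L w₀) * (F w₀ - z) := isOpen_ball.is_const_of_deriv_eq_zero (convex_ball w₀ R).isPreconnected
      (fun x hx => (hder x hx).differentiableAt.differentiableWithinAt)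
      (fun x hx => (hder x hx).deriv) hw hw₀
    have h1 : exp (-L w₀) * (F w₀ - z) = 1 := by
      simp [L, exp_neg, exp_log (h0 w₀ hw₀), inv_mul_cancel₀ (h0 w₀ hw₀)]
    rw [h1, exp_neg] at hc
    field_simp at hc
    exact hc.symm
  have hLd : DifferentiableOn ℂ L (ball w₀ R) := fun w hw =>
    (hL w hw).differentiableAt.differentiableWithinAt
  have hLinj : ∀ w ∈ ball w₀ R, ∀ w' ∈ ball w₀ R, exp (L w) = exp (L w') → w = w' :=
    fun w hw w' hw' h => by
      rw [hexp w hw, hexp w' hw'] at h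
      exact hinj hw hw' (sub_left_inj.1 h)
  have key : ∀ r, 0 < r → r < R → ‖deriv L w₀‖ * r ≤ 48 * Real.pi := fun r hr hrR => by
    by_contra! hlt
    have hsub : closedBall w₀ r ⊆ ball w₀ R := closedBall_subset_ball hrR
    have hcont : ContinuousOn (fun w => ‖deriv L w‖ * (r - dist w w₀)) (closedBall w₀ r) :=
      (((hLd.deriv isOpen_ball).continuousOn.mono hsub).norm).mul (by fun_prop)
    obtain ⟨a, ha, hmax⟩ := (isCompact_closedBall w₀ r).exists_isMaxOn
      ⟨w₀, mem_closedBall_self hr.le⟩ hcont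
    have hM := hmax (mem_closedBall_self hr.le)
    simp only [mem_ofPred_eq, dist_self, sub_zero] at hM
    set A := ‖deriv L a‖ with hA
    set ρ := r - dist a w₀ with hρ
    have hAρ : 48 * Real.pi < A * ρ := hlt.trans_le hM
    have hApos : 0 < A := by
      rcases (norm_nonneg (deriv L a)).eq_or_lt with h | h
      · rw [hA, ← h, zero_mul] at hAρ
        have := Real.pi_pos
        linarith
      · exact h
    have hρpos : 0 < ρ := pos_of_mul_pos_right (lt_trans (by positivity) hAρ) hApos.le
    have hball : ball a (ρ / 2) ⊆ closedBall w₀ r := fun w hw => by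
      rw [mem_ball] at hw
      rw [mem_closedBall]
      have := dist_triangle w a w₀
      linarith
    have hbd : ∀ w ∈ ball a (ρ / 2), ‖deriv L w‖ ≤ 2 * A := fun w hw => by
      have h1 : ‖deriv L w‖ * (r - dist w w₀) ≤ A * ρ := hmax (hball hw)
      rw [mem_ball] at hw
      have h2 := dist_triangle w a w₀
      have h3 : ‖deriv L w‖ * (ρ / 2) ≤ ‖deriv L w‖ * (r - dist w w₀) := by
        gcongr; linarith
      have h4 : ‖deriv L w‖ * (ρ / 2) ≤ 2 * A * (ρ / 2) := by linarith
      exact le_of_mul_le_mul_right h4 (by positivity)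
    have himg := ball_subset_image_of_norm_deriv_le (half_pos hρpos) hApos
      (hLd.mono (hball.trans hsub)) hA.symm hbd
    have hpi : Real.pi < A * (ρ / 2) / 24 := by linarith
    have hnorm : ‖(Real.pi * I : ℂ)‖ = Real.pi := by simp [Real.pi_pos.le]
    obtain ⟨w, hw, hwe⟩ : L a + Real.pi * I ∈ L '' ball a (ρ / 2) := himg (by simpa [abs_of_pos Real.pi_pos])
    obtain ⟨w', hw', hwe'⟩ : L a - Real.pi * I ∈ L '' ball a (ρ / 2) :=
      himg (by simpa [abs_of_pos Real.pi_pos])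
    have hww : w = w' := hLinj w (hsub (hball hw)) w' (hsub (hball hw')) (by
      rw [hwe, hwe', exp_add, exp_sub, exp_pi_mul_I]; field_simp)
    rw [hww, hwe'] at hwe
    have : (Real.pi : ℂ) * I = 0 := by linear_combination -hwe / 2
    simp [Real.pi_ne_zero] at this
  have hle : ‖deriv L w₀‖ * R ≤ 48 * Real.pi := by
    have ht : Tendsto (fun r : ℝ => ‖deriv L w₀‖ * r) (𝓝[<] R) (𝓝 (‖deriv L w₀‖ * R)) :=
      (tendsto_nhdsWithin_of_tendsto_nhds tendsto_id).const_mul _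
    refine le_of_tendsto ht ?_
    filter_upwards [Ioo_mem_nhdsLT hR] with r hr
    exact key r hr.1 hr.2
  rw [(hL w₀ hw₀).deriv, norm_div, div_mul_eq_mul_div,
    div_le_iff₀ (norm_pos_iff.2 (h0 w₀ hw₀))] at hle
  exact hle

section Growth

variable {Ω : Set ℂ} {Φ : ℂ → ℂ}

lemma IsExtConformal.norm_deriv_extInv_mul_le (h : IsExtConformal Ω Φ) (hΩ : IsOpen Ω) {z : ℂ}
    (hz : z ∉ Ω) {w : ℂ} (hw : w ∈ extDisk) :
    ‖deriv (extInv Ω Φ) w‖ * (‖w‖ - 1) ≤ 48 * Real.pi * ‖extInv Ω Φ w - z‖ := by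
  have hsub : ball w (‖w‖ - 1) ⊆ extDisk := fun y hy => by
    rw [mem_ball, dist_comm, dist_eq_norm] at hy
    have := norm_sub_norm_le w y
    change 1 < ‖y‖
    linarith
  exact norm_deriv_mul_le_of_injOn (sub_pos.2 hw) ((h.differentiableOn_extInv hΩ).mono hsub)
    (h.injOn_extInv.mono hsub) fun y hy hyz => hz (hyz ▸ h.extInv_mem (hsub hy))

lemma one_add_mul_mem_extDisk {a : ℂ} (ha : ‖a‖ = 1) {s : ℝ} (hs : 0 < s) :
    (1 + s : ℂ) * a ∈ extDisk := by
  change 1 < ‖(1 + s : ℂ) * a‖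
  rw [norm_mul, ha, mul_one, show (1 + s : ℂ) = ((1 + s : ℝ) : ℂ) by push_cast; rfl, norm_real,
    Real.norm_of_nonneg (by linarith)]
  linarith

lemma norm_one_add_mul {a : ℂ} (ha : ‖a‖ = 1) {s : ℝ} (hs : 0 < s) :
    ‖(1 + s : ℂ) * a‖ = 1 + s := by
  rw [norm_mul, ha, mul_one, show (1 + s : ℂ) = ((1 + s : ℝ) : ℂ) by push_cast; rfl, norm_real,
    Real.norm_of_nonneg (by linarith)]

lemma IsExtConformal.norm_extInv_sub_le (h : IsExtConformal Ω Φ) (hΩ : IsOpen Ω) {z : ℂ}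
    (hz : z ∉ Ω) {a : ℂ} (ha : ‖a‖ = 1) {u v : ℝ} (hv : 0 < v) (hvu : v ≤ u) :
    ‖extInv Ω Φ ((1 + u) * a) - z‖ ≤
      (u / v) ^ (48 * Real.pi) * ‖extInv Ω Φ ((1 + v) * a) - z‖ := by
  have hu := hv.trans_le hvu
  set H : ℝ → ℂ := fun x => extInv Ω Φ ((1 + Real.exp x) * a) - z with hH
  have hder : ∀ x : ℝ, HasDerivAt H (deriv (extInv Ω Φ) ((1 + Real.exp x) * a) *
      ((Real.exp x : ℝ) * a)) x := fun x => by
    have h1 := (h.differentiableAt_extInv hΩ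
      (one_add_mul_mem_extDisk ha (Real.exp_pos x))).hasDerivAt
    have h2 : HasDerivAt (fun x : ℝ => (1 + (Real.exp x : ℝ) : ℂ) * a) ((Real.exp x : ℝ) * a) x :=
      ((Real.hasDerivAt_exp x).ofReal_comp.const_add 1).mul_const a
    exact (h1.comp x h2).sub_const z
  have hbound : ∀ x, ‖deriv (extInv Ω Φ) ((1 + Real.exp x) * a) * ((Real.exp x : ℝ) * a)‖ ≤
      48 * Real.pi * ‖H x‖ + 0 := fun x => by
    have := h.norm_deriv_extInv_mul_le hΩ hz (one_add_mul_mem_extDisk ha (Real.exp_pos x))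
    rw [norm_one_add_mul ha (Real.exp_pos x)] at this
    rw [norm_mul, norm_mul, ha, norm_real, Real.norm_of_nonneg (Real.exp_pos x).le, add_zero]
    rw [mul_one]
    rwa [add_sub_cancel_left] at this
  have hg := norm_le_gronwallBound_of_norm_deriv_right_le (f := H) (δ := ‖H (Real.log v)‖)
    (a := Real.log v) (b := Real.log u)
    (fun x _ => (hder x).continuousAt.continuousWithinAt)
    (fun x _ => (hder x).hasDerivWithinAt) le_rfl (fun x _ => hbound x) (Real.log u)
    ⟨Real.log_le_log hv hvu, le_rfl⟩
  rw [gronwallBound_ε0] at hg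
  simp only [hH, Real.exp_log hu, Real.exp_log hv] at hg
  rw [Real.rpow_def_of_pos (by positivity), Real.log_div hu.ne' hv.ne',
    mul_comm (Real.exp _), mul_comm (_ - _)]
  exact hg

lemma IsExtConformal.rho_le_rpow_mul_rho (h : IsExtConformal Ω Φ) (hΩ : IsOpen Ω) {R₀ : ℝ}
    (hR₀ : {z : ℂ | R₀ < ‖z‖} ⊆ Ω) {z : ℂ} (hz : z ∉ Ω) {u v : ℝ} (hv : 0 < v) (hvu : v ≤ u) :
    rho Ω Φ u z ≤ (u / v) ^ (48 * Real.pi) * rho Ω Φ v z := by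
  have hu := hv.trans_le hvu
  obtain ⟨w, hw, hd⟩ := h.exists_rho_eq hΩ hv z
  have hw0 : (‖w‖ : ℂ) ≠ 0 := by
    rw [hw]; exact_mod_cast (by linarith : 1 + v ≠ 0)
  have ha : ‖w / ‖w‖‖ = 1 := by
    rw [norm_div, norm_real, norm_norm, div_self (by exact_mod_cast hw0)]
  have hwa : w = (1 + v) * (w / ‖w‖) := by
    rw [show (1 + v : ℂ) = (‖w‖ : ℂ) by rw [hw]; push_cast; rfl]
    field_simp
  have hD := one_add_mul_mem_extDisk ha hu
  have h1 := h.rho_le_dist hΩ hR₀ hu hz (h.extInv_mem hD)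
    (by rw [h.apply_extInv hD, norm_one_add_mul ha hu])
  have h2 := h.norm_extInv_sub_le hΩ hz ha hv hvu
  rw [← hwa] at h2
  rw [hd, dist_comm z, dist_eq_norm]
  rw [dist_comm, dist_eq_norm] at h1
  exact h1.trans h2

end Growth

lemma lintegral_image_eq_of_injOn {U S : Set ℂ} {F : ℂ → ℂ} (hU : IsOpen U)
    (hF : DifferentiableOn ℂ F U) (hinj : InjOn F U) (hS : MeasurableSet S) (hSU : S ⊆ U) :
    volume (F '' S) = ∫⁻ ξ in S, ENNReal.ofReal (‖deriv F ξ‖ ^ 2) := by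
  have hder : ∀ x ∈ S, HasFDerivWithinAt F
      ((ContinuousLinearMap.toSpanSingleton ℂ (deriv F x)).restrictScalars ℝ) S x := fun x hx =>
    ((hF.differentiableAt (hU.mem_nhds (hSU hx))).hasDerivAt.hasFDerivAt.restrictScalars ℝ
      ).hasFDerivWithinAt
  have := lintegral_image_eq_lintegral_abs_det_fderiv_mul volume hS hder (hinj.mono hSU) 1
  simp only [Pi.one_apply, lintegral_const, MeasurableSet.univ, Measure.restrict_apply, univ_inter,
    one_mul, mul_one] at this
  rw [this]
  congr 1
  ext x
  congr 1
  simp [ContinuousLinearMap.det, LinearMap.det_restrictScalars, Algebra.norm_complex_apply,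
    normSq_eq_norm_sq]

lemma exists_first_exit {f : ℝ → ℂ} {a b d : ℝ} (hab : a ≤ b) (hf : ContinuousOn f (Icc a b))
    (hd : d ≤ ‖f b - f a‖) :
    ∃ τ ∈ Icc a b, d ≤ ‖f τ - f a‖ ∧ ∀ φ ∈ Ico a τ, ‖f φ - f a‖ < d := by
  have hcl : IsCompact (Icc a b ∩ (fun φ => ‖f φ - f a‖) ⁻¹' Ici d) :=
    isCompact_Icc.of_isClosed_subset
      ((hf.sub continuousOn_const).norm.preimage_isClosed_of_isClosed isClosed_Icc isClosed_Ici)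
      inter_subset_left
  obtain ⟨τ, hτ, hmin⟩ := hcl.exists_isLeast ⟨b, ⟨hab, le_rfl⟩, hd⟩
  refine ⟨τ, hτ.1, hτ.2, fun φ hφ => ?_⟩
  by_contra! h
  exact (hmin ⟨⟨hφ.1, hφ.2.le.trans hτ.1.2⟩, h⟩).not_gt hφ.2

lemma exists_exit_uIcc {f : ℝ → ℂ} {a b d : ℝ} (hf : ContinuousOn f (uIcc a b))
    (hd : d ≤ ‖f b - f a‖) :
    ∃ σ τ, σ ≤ τ ∧ Icc σ τ ⊆ uIcc a b ∧ d ≤ ‖f τ - f σ‖ ∧ ∀ φ ∈ Ioo σ τ, ‖f φ - f a‖ < d := by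
  rcases le_total a b with hab | hab
  · rw [uIcc_of_le hab] at hf ⊢
    obtain ⟨τ, hτ, h1, h2⟩ := exists_first_exit hab hf hd
    exact ⟨a, τ, hτ.1, Icc_subset_Icc le_rfl hτ.2, h1, fun φ hφ => h2 φ ⟨hφ.1.le, hφ.2⟩⟩
  · rw [uIcc_of_ge hab] at hf ⊢
    obtain ⟨τ, hτ, h1, h2⟩ := exists_first_exit (f := fun x => f (-x)) (neg_le_neg hab)
      (hf.comp continuous_neg.continuousOn fun x hx => ⟨by linarith [hx.2], by linarith [hx.1]⟩)
      (by simpa using hd)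
    rw [neg_neg] at h1 h2
    refine ⟨-τ, a, by linarith [hτ.1], Icc_subset_Icc (by linarith [hτ.2]) le_rfl, ?_,
      fun φ hφ => ?_⟩
    · rwa [norm_sub_rev]
    · have := h2 (-φ) ⟨by linarith [hφ.2], by linarith [hφ.1]⟩
      rwa [neg_neg] at this

/-- A curve of displacement at least `d` over a parameter interval of length at most `2π` has
energy at least `d² / 2π`. -/
lemma sq_div_le_integral_norm_sq {f f' : ℝ → ℂ} {σ τ d : ℝ} (hd : 0 < d) (hστ : σ ≤ τ)
    (hlen : τ - σ ≤ 2 * Real.pi) (hf : ∀ x ∈ Icc σ τ, HasDerivAt f (f' x) x)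
    (hf' : ContinuousOn f' (Icc σ τ)) (h : d ≤ ‖f τ - f σ‖) :
    d ^ 2 / (2 * Real.pi) ≤ ∫ x in σ..τ, ‖f' x‖ ^ 2 := by
  have hpi := Real.pi_pos
  have hcu : ContinuousOn f' (uIcc σ τ) := by rwa [uIcc_of_le hστ]
  have h1 : ∫ x in σ..τ, f' x = f τ - f σ :=
    intervalIntegral.integral_eq_sub_of_hasDerivAt (by rwa [uIcc_of_le hστ])
      hcu.intervalIntegrable
  have h2 : d ≤ ∫ x in σ..τ, ‖f' x‖ := by
    rw [← h1] at h
    exact h.trans (intervalIntegral.norm_integral_le_integral_norm hστ)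
  have h3 : ∫ x in σ..τ, ‖f' x‖ ≤
      ∫ x in σ..τ, (d / (4 * Real.pi) + Real.pi / d * ‖f' x‖ ^ 2) := by
    refine intervalIntegral.integral_mono_on hστ hcu.norm.intervalIntegrable
      (ContinuousOn.intervalIntegrable (by fun_prop)) fun x _ => ?_
    have : d / (4 * Real.pi) + Real.pi / d * ‖f' x‖ ^ 2 - ‖f' x‖ =
        Real.pi / d * (‖f' x‖ - d / (2 * Real.pi)) ^ 2 := by
      field_simp; ring
    have h0 : 0 ≤ Real.pi / d * (‖f' x‖ - d / (2 * Real.pi)) ^ 2 := by positivity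
    linarith
  rw [intervalIntegral.integral_add (by simp)
    (ContinuousOn.intervalIntegrable (by fun_prop)), intervalIntegral.integral_const,
    intervalIntegral.integral_const_mul, smul_eq_mul] at h3
  have h4 : (τ - σ) * (d / (4 * Real.pi)) ≤ d / 2 := by
    calc (τ - σ) * (d / (4 * Real.pi)) ≤ (2 * Real.pi) * (d / (4 * Real.pi)) := by gcongr
      _ = d / 2 := by field_simp; norm_num
  have h5 : d / 2 ≤ Real.pi / d * ∫ x in σ..τ, ‖f' x‖ ^ 2 := by linarith
  calc d ^ 2 / (2 * Real.pi) = d / Real.pi * (d / 2) := by field_simp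
    _ ≤ d / Real.pi * (Real.pi / d * ∫ x in σ..τ, ‖f' x‖ ^ 2) := by gcongr
    _ = _ := by field_simp

lemma one_lt_norm_one_add_iff {t φ : ℝ} (ht : 0 < t) :
    1 < ‖1 + t * exp (φ * I)‖ ↔ -(t / 2) < Real.cos φ := by
  have h : ‖1 + t * exp (φ * I)‖ ^ 2 = 1 + t * (2 * Real.cos φ + t) := by
    rw [← normSq_eq_norm_sq, normSq_apply]
    simp [exp_ofReal_mul_I_re, exp_ofReal_mul_I_im]
    linear_combination t ^ 2 * Real.sin_sq_add_cos_sq φ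
  rw [← one_lt_sq_iff₀ (norm_nonneg _), h]
  constructor
  · intro h1
    have : 0 < 2 * Real.cos φ + t := pos_of_mul_pos_right (by linarith) ht.le
    linarith
  · intro h1
    have : 0 < t * (2 * Real.cos φ + t) := mul_pos ht (by linarith)
    linarith

lemma one_lt_norm_one_add_of_mem_uIcc {t a b φ : ℝ} (ht : 0 < t) (ha : |a| ≤ Real.pi)
    (hb : |b| ≤ Real.pi) (hat : 1 < ‖1 + t * exp (a * I)‖) (hbt : 1 < ‖1 + t * exp (b * I)‖)
    (hφ : φ ∈ uIcc a b) : 1 < ‖1 + t * exp (φ * I)‖ := by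
  rw [one_lt_norm_one_add_iff ht] at *
  have hle : |φ| ≤ max |a| |b| := by
    rw [abs_le]
    have h1 := le_max_left |a| |b|
    have h2 := le_max_right |a| |b|
    have := neg_abs_le a
    have := neg_abs_le b
    have := le_abs_self a
    have := le_abs_self b
    rcases mem_uIcc.1 hφ with h | h <;> constructor <;> linarith [h.1, h.2]
  rw [← Real.cos_abs φ]
  rw [← Real.cos_abs a] at hat
  rw [← Real.cos_abs b] at hbt
  rcases le_max_iff.1 hle with h | h
  · exact hat.trans_le (Real.cos_le_cos_of_nonneg_of_le_pi (abs_nonneg _) ha h)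
  · exact hbt.trans_le (Real.cos_le_cos_of_nonneg_of_le_pi (abs_nonneg _) hb h)

lemma isOpen_one_lt_norm_one_add : IsOpen {ξ : ℂ | 1 < ‖1 + ξ‖} :=
  isOpen_lt continuous_const (by fun_prop)

lemma hasDerivAt_comp_circle {F : ℂ → ℂ} {t φ : ℝ}
    (hF : DifferentiableAt ℂ F (t * exp (φ * I))) :
    HasDerivAt (fun φ : ℝ => F (t * exp (φ * I)))
      (deriv F (t * exp (φ * I)) * (t * (exp (φ * I) * I))) φ := by
  have h1 : HasDerivAt (fun φ : ℝ => (t : ℂ) * exp (φ * I)) (t * (exp (φ * I) * I)) φ := by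
    have : HasDerivAt (fun φ : ℝ => (φ : ℂ) * I) I φ := by
      simpa using (hasDerivAt_id φ).ofReal_comp.mul_const I
    exact this.cexp.const_mul _
  exact hF.hasDerivAt.comp φ h1

/-- The energy estimate on a single circular arc centred at a point of the unit circle. -/
lemma le_lintegral_arc {F : ℂ → ℂ} (hF : DifferentiableOn ℂ F {ξ : ℂ | 1 < ‖1 + ξ‖})
    {t ρ d : ℝ} (ht : 0 < t) (hd : 0 < d) {z ξ₁ ξ₂ : ℂ} (h₁ : 1 < ‖1 + ξ₁‖)
    (h₂ : 1 < ‖1 + ξ₂‖) (ht₁ : ‖ξ₁‖ = t) (ht₂ : ‖ξ₂‖ = t) (hz : ‖F ξ₁ - z‖ < ρ)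
    (hdist : d < ‖F ξ₂ - F ξ₁‖) :
    ENNReal.ofReal (d ^ 2 / (2 * Real.pi) * t⁻¹) ≤ ∫⁻ φ in Ioo (-Real.pi) Real.pi,
      ENNReal.ofReal t * {ξ : ℂ | 1 < ‖1 + ξ‖ ∧ ‖F ξ - z‖ < ρ + d}.indicator
        (fun ξ => ENNReal.ofReal (‖deriv F ξ‖ ^ 2)) (t * exp (φ * I)) := by
  have hU := isOpen_one_lt_norm_one_add
  set U := {ξ : ℂ | 1 < ‖1 + ξ‖} with hUdef
  have hpolar : ∀ ξ : ℂ, ‖ξ‖ = t → t * exp (arg ξ * I) = ξ := fun ξ hξ => by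
    rw [← hξ]; exact norm_mul_exp_arg_mul_I ξ
  have habs : ∀ ξ : ℂ, |arg ξ| ≤ Real.pi := fun ξ => abs_arg_le_pi ξ
  have hmemU : ∀ φ ∈ uIcc (arg ξ₁) (arg ξ₂), (t * exp (φ * I) : ℂ) ∈ U := fun φ hφ =>
    one_lt_norm_one_add_of_mem_uIcc ht (habs _) (habs _) (by rwa [hpolar _ ht₁])
      (by rwa [hpolar _ ht₂]) hφ
  set f : ℝ → ℂ := fun φ => F (t * exp (φ * I)) with hf
  set f' : ℝ → ℂ := fun φ => deriv F (t * exp (φ * I)) * (t * (exp (φ * I) * I)) with hf'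
  have hder : ∀ φ ∈ uIcc (arg ξ₁) (arg ξ₂), HasDerivAt f (f' φ) φ := fun φ hφ =>
    hasDerivAt_comp_circle (hF.differentiableAt (hU.mem_nhds (hmemU φ hφ)))
  have hf'c : ContinuousOn f' (uIcc (arg ξ₁) (arg ξ₂)) :=
    (((hF.deriv hU).continuousOn).comp (by fun_prop) hmemU).mul (by fun_prop)
  have hf₁ : f (arg ξ₁) = F ξ₁ := by rw [hf]; simp only [hpolar _ ht₁]
  have hf₂ : f (arg ξ₂) = F ξ₂ := by rw [hf]; simp only [hpolar _ ht₂]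
  obtain ⟨σ, τ, hστ, hsub, hdτ, hin⟩ := exists_exit_uIcc (d := d)
    (fun φ hφ => (hder φ hφ).continuousAt.continuousWithinAt)
    (by rw [hf₁, hf₂]; exact hdist.le)
  have hpiI : uIcc (arg ξ₁) (arg ξ₂) ⊆ Icc (-Real.pi) Real.pi := by
    refine uIcc_subset_Icc ?_ ?_ <;> exact abs_le.1 (habs _)
  have hσ := hpiI (hsub (left_mem_Icc.2 hστ))
  have hτ := hpiI (hsub (right_mem_Icc.2 hστ))
  have hen := sq_div_le_integral_norm_sq hd hστ (by linarith [hσ.1, hτ.2])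
    (fun x hx => hder x (hsub hx)) (hf'c.mono hsub) hdτ
  have hnf' : ∀ φ, ‖f' φ‖ ^ 2 = t * (t * ‖deriv F (t * exp (φ * I))‖ ^ 2) := fun φ => by
    simp only [hf', norm_mul, norm_exp_ofReal_mul_I, norm_I, norm_real, Real.norm_of_nonneg ht.le]
    ring
  have hcont : ContinuousOn (fun φ : ℝ => t * ‖deriv F (t * exp (φ * I))‖ ^ 2) (Icc σ τ) :=
    ((((hF.deriv hU).continuousOn).comp (by fun_prop) fun φ hφ => hmemU φ (hsub hφ)).norm.pow 2
      ).const_mul t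
  have hen' : d ^ 2 / (2 * Real.pi) * t⁻¹ ≤
      ∫ φ in Ioo σ τ, t * ‖deriv F (t * exp (φ * I))‖ ^ 2 := by
    simp only [hnf', intervalIntegral.integral_const_mul] at hen
    rw [intervalIntegral.integral_of_le hστ] at hen
    rw [← integral_Ioc_eq_integral_Ioo, MeasureTheory.integral_const_mul, ← div_eq_mul_inv, div_le_iff₀ ht]
    linarith
  refine (ENNReal.ofReal_le_ofReal hen').trans ?_
  rw [ofReal_integral_eq_lintegral_ofReal
    ((hcont.integrableOn_Icc).mono_set Ioo_subset_Icc_self)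
    (Eventually.of_forall fun φ => by positivity)]
  refine (setLIntegral_mono' measurableSet_Ioo fun φ hφ => ?_).trans
    (lintegral_mono_set (Ioo_subset_Ioo hσ.1 hτ.2))
  have hφU := hmemU φ (hsub ⟨hφ.1.le, hφ.2.le⟩)
  rw [indicator_of_mem, ENNReal.ofReal_mul ht.le]
  refine ⟨hφU, ?_⟩
  have h1 := hin φ hφ
  rw [hf₁] at h1
  have h2 := norm_sub_le_norm_sub_add_norm_sub (f φ) (F ξ₁) z
  change ‖f φ - z‖ < _
  linarith

/-- The length-area estimate. -/
lemma log_div_le_of_displacement {F : ℂ → ℂ} (hF : DifferentiableOn ℂ F {ξ : ℂ | 1 < ‖1 + ξ‖})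
    (hinj : InjOn F {ξ : ℂ | 1 < ‖1 + ξ‖}) {u v ρ d : ℝ} (hv : 0 < v) (hvu : v < u)
    (hd : 0 < d) (hρ : 0 ≤ ρ) {z : ℂ}
    (H : ∀ t ∈ Ioo v u, ∃ ξ₁ ξ₂ : ℂ, 1 < ‖1 + ξ₁‖ ∧ 1 < ‖1 + ξ₂‖ ∧ ‖ξ₁‖ = t ∧ ‖ξ₂‖ = t ∧
      ‖F ξ₁ - z‖ < ρ ∧ d < ‖F ξ₂ - F ξ₁‖) :
    d ^ 2 / (2 * Real.pi) * Real.log (u / v) ≤ Real.pi * (ρ + d) ^ 2 := by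
  have hU := isOpen_one_lt_norm_one_add
  set W := {ξ : ℂ | 1 < ‖1 + ξ‖ ∧ ‖F ξ - z‖ < ρ + d} with hW
  have hWo : IsOpen W :=
    (hF.continuousOn.sub continuousOn_const).norm.isOpen_inter_preimage hU isOpen_Iio
  have hWU : W ⊆ {ξ : ℂ | 1 < ‖1 + ξ‖} := fun ξ hξ => hξ.1
  set g : ℂ → ℝ≥0∞ := W.indicator fun ξ => ENNReal.ofReal (‖deriv F ξ‖ ^ 2) with hg
  have hgm : Measurable g := by
    refine Measurable.indicator ?_ hWo.measurableSet
    exact ((measurable_deriv F).norm.pow_const 2).ennreal_ofReal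
  have harea : ∫⁻ ξ, g ξ ≤ ENNReal.ofReal (Real.pi * (ρ + d) ^ 2) := by
    rw [hg, lintegral_indicator hWo.measurableSet,
      ← lintegral_image_eq_of_injOn hU hF hinj hWo.measurableSet hWU]
    have : F '' W ⊆ ball z (ρ + d) := by
      rintro _ ⟨ξ, hξ, rfl⟩
      rw [mem_ball, dist_eq_norm]
      exact hξ.2
    refine (measure_mono this).trans ?_
    rw [Complex.volume_ball, mul_comm, ENNReal.ofReal_mul Real.pi_pos.le,
      ENNReal.ofReal_pow (by positivity)]
    gcongr
    rw [← NNReal.coe_real_pi, ENNReal.ofReal_coe_nnreal]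
  rw [← Complex.lintegral_comp_polarCoord_symm] at harea
  have hpt : _root_.polarCoord.target = Ioi (0 : ℝ) ×ˢ Ioo (-Real.pi) Real.pi := rfl
  have hsymm : ∀ p : ℝ × ℝ, Complex.polarCoord.symm p = p.1 * exp (p.2 * I) := fun p => by
    rw [Complex.polarCoord_symm_apply, exp_mul_I]
    push_cast; ring
  simp only [hpt, hsymm, smul_eq_mul] at harea
  rw [Measure.volume_eq_prod, ← Measure.prod_restrict, lintegral_prod _ (by fun_prop)] at harea
  have hlow : ENNReal.ofReal (d ^ 2 / (2 * Real.pi) * Real.log (u / v)) ≤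
      ∫⁻ t in Ioi (0 : ℝ), ∫⁻ φ in Ioo (-Real.pi) Real.pi,
        ENNReal.ofReal t * g (t * exp (φ * I)) := by
    have hint : ∫ t in v..u, d ^ 2 / (2 * Real.pi) * t⁻¹ =
        d ^ 2 / (2 * Real.pi) * Real.log (u / v) := by
      rw [intervalIntegral.integral_const_mul, integral_inv_of_pos hv (hv.trans hvu)]
    rw [← hint, intervalIntegral.integral_of_le hvu.le, integral_Ioc_eq_integral_Ioo,
      ofReal_integral_eq_lintegral_ofReal]
    · refine (setLIntegral_mono' measurableSet_Ioo fun t ht => ?_).trans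
        (lintegral_mono_set fun t ht => hv.trans ht.1)
      obtain ⟨ξ₁, ξ₂, h1, h2, h3, h4, h5, h6⟩ := H t ht
      exact le_lintegral_arc hF (hv.trans ht.1) hd h1 h2 h3 h4 h5 h6
    · have hc : ContinuousOn (fun t : ℝ => d ^ 2 / (2 * Real.pi) * t⁻¹) (Icc v u) :=
        continuousOn_const.mul (continuousOn_inv₀.mono fun t ht => (hv.trans_le ht.1).ne')
      exact hc.integrableOn_Icc.mono_set Ioo_subset_Icc_self
    · filter_upwards [ae_restrict_mem measurableSet_Ioo] with t ht
      have := hv.trans ht.1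
      positivity
  exact (ENNReal.ofReal_le_ofReal_iff (by positivity)).1 (hlow.trans harea)

section LowerBound

variable {Ω : Set ℂ} {Φ : ℂ → ℂ}

lemma IsExtConformal.exists_norm_sub_eq (h : IsExtConformal Ω Φ) {P : Set ℂ}
    (hP : IsPreconnected P) (hPΩ : P ⊆ Ω) {a b c : ℂ} {t : ℝ} (ha : a ∈ P) (hb : b ∈ P)
    (hat : ‖Φ a - c‖ ≤ t) (hbt : t ≤ ‖Φ b - c‖) : ∃ p ∈ P, ‖Φ p - c‖ = t :=
  hP.intermediate_value ha hb (((h.1.continuousOn.mono hPΩ).sub continuousOn_const).norm)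
    ⟨hat, hbt⟩

variable {Γ : Set ℂ} {K : ℝ}

lemma exists_far_point (h : IsExtConformal Ω Φ) {R₀ : ℝ} (hR₀ : {z : ℂ | R₀ < ‖z‖} ⊆ Ω)
    (c p : ℂ) (t s : ℝ) : ∃ q ∈ Ω, t < ‖Φ q - c‖ ∧ s < dist q p := by
  obtain ⟨q, ⟨h1, h2⟩, h3⟩ := (((h.tendsto_norm.eventually_gt_atTop (t + ‖c‖)).and
    (tendsto_norm_cobounded_atTop.eventually_gt_atTop (s + ‖p‖))).and
    (tendsto_norm_cobounded_atTop.eventually_gt_atTop R₀)).exists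
  refine ⟨q, hR₀ h3, ?_, ?_⟩
  · have := norm_sub_norm_le (Φ q) c
    linarith
  · have := norm_sub_norm_le q p
    rw [dist_eq_norm]
    linarith

/-- If the distance to the level curves does not double, the level ratio is bounded. -/
lemma log_div_le_of_rho_lt (hΓ : IsJordanCurve Γ) (hK : IsBoundedTurning Γ K) (hK0 : 0 ≤ K)
    (h : IsExtConformal (unboundedComponent Γ) Φ) {R₀ : ℝ}
    (hR₀ : {z : ℂ | R₀ < ‖z‖} ⊆ unboundedComponent Γ) {z : ℂ} (hz : z ∈ Γ) {u v : ℝ}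
    (hv : 0 < v) (hvu : v < u)
    (hlt : rho (unboundedComponent Γ) Φ u z < 2 * rho (unboundedComponent Γ) Φ v z) :
    Real.log (u / v) ≤ 2 * Real.pi ^ 2 * (16 * (2 * K + 2) ^ 2 + 1) ^ 2 := by
  have hΩ := isOpen_unboundedComponent hΓ.isCompact.isClosed
  have hΩΓ : unboundedComponent Γ ⊆ Γᶜ := fun x hx => hx.1
  have hzΩ : z ∉ unboundedComponent Γ := fun hx => hx.1 hz
  have hΩc := h.isPreconnected hΩ
  set Ω := unboundedComponent Γ with hΩdef
  set C := 2 * K + 2 with hC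
  have hC0 : 0 < C := by positivity
  have hr := h.rho_pos hΩ hv hzΩ
  set r := rho Ω Φ v z with hrdef
  obtain ⟨w₂, hw₂, hζ₂⟩ := h.exists_rho_eq hΩ (hv.trans hvu) z
  have hw₂D : w₂ ∈ extDisk := by change 1 < ‖w₂‖; linarith
  have hcl := hΓ.subset_closure_unboundedComponent ⟨_, h.extInv_mem hw₂D⟩ hz
  obtain ⟨x, hx, hxz⟩ := Metric.mem_closure_iff.1 hcl (r / 2) (half_pos hr)
  have hxv : ‖Φ x‖ < 1 + v := by
    by_contra! hcon
    have := h.rho_le_dist hΩ hR₀ hv hzΩ hx hcon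
    linarith
  have hx1 : 1 < ‖Φ x‖ := h.2.1.mapsTo hx
  have hx0 : (‖Φ x‖ : ℂ) ≠ 0 := by exact_mod_cast (by linarith : ‖Φ x‖ ≠ 0)
  set a := Φ x / ‖Φ x‖ with hadef
  have ha : ‖a‖ = 1 := by
    rw [hadef, norm_div, norm_real, norm_norm, div_self (by linarith)]
  have ha0 : a ≠ 0 := by rw [← norm_pos_iff, ha]; exact one_pos
  have hxa : ‖Φ x - a‖ ≤ v := by
    have : Φ x - a = ((‖Φ x‖ - 1 : ℝ) : ℂ) * a := by
      rw [hadef]; push_cast; field_simp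
    rw [this, norm_mul, ha, norm_real, Real.norm_of_nonneg (by linarith)]
    linarith
  have hbD := one_add_mul_mem_extDisk ha hv
  set b := extInv Ω Φ ((1 + v) * a) with hbdef
  have hbΩ : b ∈ Ω := h.extInv_mem hbD
  have hΦb : Φ b = (1 + v) * a := h.apply_extInv hbD
  have hba : ‖Φ b - a‖ ≤ v := by
    rw [hΦb, show (1 + v : ℂ) * a - a = (v : ℂ) * a by ring, norm_mul, ha, norm_real,
      Real.norm_of_nonneg hv.le, mul_one]
  have hbz : r ≤ dist z b := h.rho_le_dist hΩ hR₀ hv hzΩ hbΩ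
    (by rw [hΦb, norm_one_add_mul ha hv])
  have hw₂a : u ≤ ‖w₂ - a‖ := by
    have := norm_sub_norm_le w₂ a
    linarith
  set d := r / (8 * C) with hd
  have hd0 : 0 < d := by positivity
  have hCd : C * d = r / 8 := by rw [hd]; field_simp
  have hmem : ∀ ξ : ℂ, 1 < ‖1 + ξ‖ → a * (1 + ξ) ∈ extDisk := fun ξ hξ => by
    change 1 < ‖a * (1 + ξ)‖
    rwa [norm_mul, ha, one_mul]
  have hcoord : ∀ w ∈ extDisk, 1 < ‖1 + (w / a - 1)‖ ∧ ‖w / a - 1‖ = ‖w - a‖ ∧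
      a * (1 + (w / a - 1)) = w := fun w hw => by
    refine ⟨?_, ?_, by field_simp; ring⟩
    · rw [add_sub_cancel, norm_div, ha, div_one]; exact hw
    · rw [← div_self ha0, ← sub_div, norm_div, ha, div_one]
  have hFd : DifferentiableOn ℂ (fun ξ => extInv Ω Φ (a * (1 + ξ))) {ξ : ℂ | 1 < ‖1 + ξ‖} :=
    (h.differentiableOn_extInv hΩ).comp (by fun_prop) hmem
  have hFinj : InjOn (fun ξ => extInv Ω Φ (a * (1 + ξ))) {ξ : ℂ | 1 < ‖1 + ξ‖} :=
    fun ξ hξ η hη hξη => by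
      have := mul_left_cancel₀ ha0 (h.injOn_extInv (hmem ξ hξ) (hmem η hη) hξη)
      exact add_left_cancel this
  have key := log_div_le_of_displacement hFd hFinj (ρ := C * (2 * r)) (z := z) hv hvu hd0
    (by positivity) fun t ht => by
    obtain ⟨P, hP, hPΓ, hxP, hζP, hPball⟩ := exists_joining_inside hΓ hK hK0 hΩc hΩΓ
      (x := z) (R := 2 * r) (by positivity) hx (h.extInv_mem hw₂D)
      (by rw [dist_comm]; linarith) (by rw [dist_comm, ← hζ₂]; exact hlt.le)
    have hPΩ := subset_unboundedComponent hP hPΓ hxP hx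
    obtain ⟨p, hpP, hpt⟩ := h.exists_norm_sub_eq hP hPΩ (c := a) (t := t) hxP hζP
      (hxa.trans ht.1.le) (by rw [h.apply_extInv hw₂D]; exact ht.2.le.trans hw₂a)
    have hpΩ := hPΩ hpP
    have hpz := hPball hpP
    rw [mem_ball, dist_eq_norm] at hpz
    obtain ⟨hp1, hp2, hp3⟩ := hcoord (Φ p) (h.2.1.mapsTo hpΩ)
    obtain ⟨w, hwD, hwt, hwd⟩ : ∃ w ∈ extDisk, ‖w - a‖ = t ∧ d < ‖extInv Ω Φ w - p‖ := by
      by_contra! hcon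
      obtain ⟨q, hq, hqt, hqp⟩ := exists_far_point h hR₀ a p t (C * d)
      have hnear : ∀ y ∈ Ω, ‖Φ y - a‖ ≤ v → dist y p ≤ C * d := fun y hy hyv => by
        by_contra! hyp
        obtain ⟨Q, hQ, hQΓ, hyQ, hqQ, hQd⟩ := exists_joining_outside hΓ hK hK0 hΩc hΩΓ
          (x := p) hd0 hy hq hyp hqp
        have hQΩ := subset_unboundedComponent hQ hQΓ hyQ hy
        obtain ⟨p', hp', hp't⟩ := h.exists_norm_sub_eq hQ hQΩ (c := a) (t := t) hyQ hqQ
          (hyv.trans ht.1.le) hqt.le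
        have h1 := hcon (Φ p') (h.2.1.mapsTo (hQΩ hp')) hp't
        rw [h.extInv_apply (hQΩ hp'), ← dist_eq_norm] at h1
        exact (hQd p' hp').not_ge h1
      have h1 := hnear x hx hxa
      have h2 := hnear b hbΩ hba
      have h3 := dist_triangle4 z x p b
      rw [dist_comm p b] at h3
      linarith
    obtain ⟨hw1, hw2, hw3⟩ := hcoord w hwD
    refine ⟨_, _, hp1, hw1, hp2.trans hpt, hw2.trans hwt, ?_, ?_⟩
    · simpa only [hp3, h.extInv_apply hpΩ] using hpz
    · simpa only [hp3, hw3, h.extInv_apply hpΩ] using hwd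
  have hρd : C * (2 * r) + d = d * (16 * C ^ 2 + 1) := by
    rw [hd]; field_simp; ring
  rw [hρd] at key
  have hpi := Real.pi_pos
  calc Real.log (u / v) = 2 * Real.pi / d ^ 2 * (d ^ 2 / (2 * Real.pi) * Real.log (u / v)) := by
        field_simp
    _ ≤ 2 * Real.pi / d ^ 2 * (Real.pi * (d * (16 * C ^ 2 + 1)) ^ 2) := by gcongr
    _ = 2 * Real.pi ^ 2 * (16 * C ^ 2 + 1) ^ 2 := by field_simp

end LowerBound

lemma le_mul_of_doubling {f : ℝ → ℝ} {N : ℝ} (hN : 0 < N) (hpos : ∀ v, 0 < v → 0 < f v)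
    (hmono : ∀ v u, 0 < v → v ≤ u → f v ≤ f u)
    (hdouble : ∀ v u, 0 < v → v < u → f u < 2 * f v → Real.log (u / v) < N)
    {u v : ℝ} (hv : 0 < v) (hvu : v < u) :
    1 / 2 * (u / v) ^ (Real.log 2 / N) * f v ≤ f u := by
  have hstep : ∀ n : ℕ, 2 ^ n * f v ≤ f (Real.exp N ^ n * v) := fun n => by
    induction n with
    | zero => simp
    | succ n ih =>
      have hpos' : 0 < Real.exp N ^ n * v := by positivity
      have h1 : 2 * f (Real.exp N ^ n * v) ≤ f (Real.exp N ^ (n + 1) * v) := by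
        by_contra! hcon
        have hlt : Real.exp N ^ n * v < Real.exp N ^ (n + 1) * v := by
          rw [pow_succ]
          have := Real.one_lt_exp_iff.2 hN
          have : 0 < Real.exp N ^ n := by positivity
          nlinarith
        have := hdouble _ _ hpos' hlt hcon
        rw [show Real.exp N ^ (n + 1) * v / (Real.exp N ^ n * v) = Real.exp N by
          rw [pow_succ]; field_simp, Real.log_exp] at this
        exact lt_irrefl _ this
      calc 2 ^ (n + 1) * f v = 2 * (2 ^ n * f v) := by ring
        _ ≤ 2 * f (Real.exp N ^ n * v) := by gcongr
        _ ≤ _ := h1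
  have hu := hv.trans hvu
  have huv : 0 < u / v := div_pos hu hv
  have hlog : 0 ≤ Real.log (u / v) := Real.log_nonneg ((one_le_div hv).2 hvu.le)
  set n := ⌊Real.log (u / v) / N⌋₊ with hn
  have hn1 : n * N ≤ Real.log (u / v) :=
    (le_div_iff₀ hN).1 (Nat.floor_le (div_nonneg hlog hN.le))
  have hn2 : Real.log (u / v) / N < n + 1 := Nat.lt_floor_add_one _
  have hle : Real.exp N ^ n * v ≤ u := by
    rw [← le_div_iff₀ hv, ← Real.exp_nat_mul, ← Real.le_log_iff_exp_le huv]
    exact hn1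
  have hpow : (u / v) ^ (Real.log 2 / N) ≤ 2 ^ (n + 1) := by
    rw [Real.rpow_def_of_pos huv, ← Real.rpow_natCast, Real.rpow_def_of_pos two_pos]
    refine Real.exp_le_exp.2 ?_
    push_cast
    calc Real.log (u / v) * (Real.log 2 / N) = Real.log 2 * (Real.log (u / v) / N) := by ring
      _ ≤ Real.log 2 * (n + 1) := by
        have := Real.log_pos one_lt_two
        gcongr
  have hfv := hpos v hv
  calc 1 / 2 * (u / v) ^ (Real.log 2 / N) * f v ≤ 1 / 2 * 2 ^ (n + 1) * f v := by gcongr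
    _ = 2 ^ n * f v := by ring
    _ ≤ f (Real.exp N ^ n * v) := hstep n
    _ ≤ f u := hmono _ _ (by positivity) hle

/-- (3.9n): there exist `α = α(Γ) ≥ 1` and `c = c(Γ) > 0` such that for
`0 < v < u ≤ 1` and `z ∈ Γ`, `(1/c)(u/v)^{1/α} ≤ ρ_u(z)/ρ_v(z) ≤ c (u/v)^{α}`. -/
theorem rho_ratio_bounds
    (Γ : Set ℂ) (Λ : ℝ) (hΓJ : IsJordanCurve Γ) (hΓq : IsQuasismooth Γ Λ)
    (Φ : ℂ → ℂ) (hΦ : IsExtConformal (unboundedComponent Γ) Φ) :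
    ∃ α : ℝ, ∃ c : ℝ, 1 ≤ α ∧ 0 < c ∧ ∀ (u v : ℝ) (z : ℂ),
      0 < v → v < u → u ≤ 1 → z ∈ Γ →
      (1/c) * (u/v) ^ (1/α) ≤
          rho (unboundedComponent Γ) Φ u z / rho (unboundedComponent Γ) Φ v z ∧
        rho (unboundedComponent Γ) Φ u z / rho (unboundedComponent Γ) Φ v z ≤
          c * (u/v) ^ α := by
  have hK := hΓq.isBoundedTurning
  have hK0 : 0 ≤ 2 * Λ := by linarith [hΓq.1]
  have hΩ := isOpen_unboundedComponent hΓJ.isCompact.isClosed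
  obtain ⟨R, hR⟩ := hΓJ.isCompact.isBounded.exists_norm_le
  have hR₀ : {z : ℂ | max R 0 < ‖z‖} ⊆ unboundedComponent Γ :=
    norm_gt_subset_unboundedComponent (le_max_right _ _)
      fun z hz => (hR z hz).trans (le_max_left _ _)
  set N := 2 * Real.pi ^ 2 * (16 * (2 * (2 * Λ) + 2) ^ 2 + 1) ^ 2 + 1 with hN
  have hN0 : 0 < N := by positivity
  have hlog2 := Real.log_pos one_lt_two
  have hpi := Real.pi_gt_three
  refine ⟨max (48 * Real.pi) (N / Real.log 2), 2, le_max_of_le_left (by linarith), two_pos,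
    fun u v z hv hvu _ hz => ?_⟩
  have hzΩ : z ∉ unboundedComponent Γ := fun hx => hx.1 hz
  have huv : 1 ≤ u / v := (one_le_div hv).2 hvu.le
  have hρ := hΦ.rho_pos hΩ hv hzΩ
  rw [le_div_iff₀ hρ, div_le_iff₀ hρ]
  constructor
  · refine le_trans ?_ (le_mul_of_doubling (f := fun s => rho (unboundedComponent Γ) Φ s z) hN0
      (fun s hs => hΦ.rho_pos hΩ hs hzΩ) (fun s t hs hst => hΦ.rho_mono hΩ hR₀ hs hst hzΩ)
      (fun s t hs hst hlt => ?_) hv hvu)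
    · gcongr 1 / 2 * ?_ * _
      refine Real.rpow_le_rpow_of_exponent_le huv ?_
      rw [show Real.log 2 / N = 1 / (N / Real.log 2) by rw [one_div_div]]
      exact one_div_le_one_div_of_le (div_pos hN0 (Real.log_pos one_lt_two)) (le_max_right _ _)
    · have := log_div_le_of_rho_lt hΓJ hK hK0 hΦ hR₀ hz hs hst hlt
      linarith
  · refine (hΦ.rho_le_rpow_mul_rho hΩ hR₀ hzΩ hv hvu.le).trans ?_
    gcongr
    calc (u / v) ^ (48 * Real.pi) ≤ (u / v) ^ max (48 * Real.pi) (N / Real.log 2) :=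
          Real.rpow_le_rpow_of_exponent_le huv (le_max_left _ _)
      _ ≤ 2 * (u / v) ^ max (48 * Real.pi) (N / Real.log 2) := by
        have : 0 ≤ (u / v) ^ max (48 * Real.pi) (N / Real.log 2) := by positivity
        linarith
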